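/- arXiv:2407.10073 — 2 statements merged into one kernel-verified Lean document; each statement's English description precedes it below -/
import Mathlib

section
/- Assume dom h has diameter at most D > 0 and M_f > 0. Set B := 8 + 12·log(1 + L_f²D²N̄/(16M_f²)) and U(ε̄) := 4(M_f² + ε̄L_f)B/(1−χ)² + N̄ε̄/λ₀. Let μ, ν ≥ 0 be such that φ = f + h is μ-convex, h is ν-convex, and ν ≤ μ, and let d₀ := dist(x̂₀, X*). Then U-PB terminates (produces x_j with φ(x_j) − φ* ≤ ε̄), and the total number of inner iterations (the ones indexed by j) that it performs is at most T + N̄·⌈2·log(λ₀U(ε̄)/(N̄ε̄))⌉, where T may be taken to be any of the following: (i) d₀²U(ε̄)/ε̄² (always valid); (ii) (1/χ)(N̄ + U(ε̄)/(με̄))·log(1 + μd₀²/ε̄), valid when χ > 0 and μ > 0; (iii) (N̄ + U(ε̄)/(νε̄))·log(1 + μd₀²/ε̄), valid when ν > 0. (log is the natural logarithm.) -/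
open scoped RealInnerProductSpace

/-!
Along a run of null steps with stepsize `λ`, the gap is at most a linearization error of `f` minus
`(1 - χ) / (2 * λ)` times the squared distance to the prox-center, and it drops at every step by
at least `1 / (2 * λ)` times the squared length of the step. Since the linearization errors are
controlled by the hybrid condition, a cycle of `N̄` steps with `λ` at most twice `N̄ε̄ / U(ε̄)`
cannot end with a gap above the threshold. Hence no stepsize falls below `N̄ε̄ / U(ε̄)`, so that
resets are logarithmically few. As long as no iterate is `ε̄`-optimal, a serious step decreases
`‖· - z‖²` by at least `λε̄` for every minimizer `z`, and under strong convexity it contracts `‖·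
- z‖² + ε̄/μ` by a constant factor. This bounds the number of serious steps, and each serious or
reset step closes a cycle of at most `N̄` iterations.
-/

namespace UPB

variable {E : Type*} [NormedAddCommGroup E] [InnerProductSpace ℝ E]

section Descent

/-- A choice `g` of subgradients of `f` on `S` that varies by at most `2 * M` plus an `L`-Lipschitz
amount: the oracle of the hybrid (nonsmooth when `L = 0`, smooth when `M = 0`) setting. -/
structure IsHybridOracle (S : Set E) (f : E → ℝ) (g : E → E) (M L : ℝ) : Prop where
  subgradient : ∀ x ∈ S, ∀ u ∈ S, f x + ⟪g x, u - x⟫ ≤ f u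
  norm_sub_le : ∀ x ∈ S, ∀ y ∈ S, ‖g x - g y‖ ≤ 2 * M + L * ‖x - y‖

/-- The error at `u` of the linearization of `f` at `x` with slope `g x`. -/
def linErr (f : E → ℝ) (g : E → E) (x u : E) : ℝ := f u - f x - ⟪g x, u - x⟫

lemma antitoneOn_of_sub_le_mul_sq {s : Set ℝ} [s.OrdConnected] {ψ : ℝ → ℝ} {C : ℝ}
    (hψ : ∀ a ∈ s, ∀ b ∈ s, a ≤ b → ψ b - ψ a ≤ C * (b - a) ^ 2) : AntitoneOn ψ s := by
  intro a ha b hb hab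
  have increment_le (m : ℕ) : ψ b - ψ a ≤ C * (b - a) ^ 2 / (m + 1) := by
    set p : ℕ → ℝ := fun i ↦ a + i * ((b - a) / (m + 1)) with hp
    have : 0 ≤ (b - a) / (m + 1) := div_nonneg (sub_nonneg.2 hab) (by positivity)
    have hlast : p (m + 1) = b := by simp only [hp]; push_cast; field_simp; ring
    have hmono : Monotone p := fun i j hij ↦ by simp only [hp]; gcongr
    have hmem (i : ℕ) (hi : i ≤ m + 1) : p i ∈ s :=
      Set.OrdConnected.out ‹_› ha hb ⟨by simpa [hp] using hmono (Nat.zero_le i), hlast ▸ hmono hi⟩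
    calc ψ b - ψ a = ∑ i ∈ Finset.range (m + 1), (ψ (p (i + 1)) - ψ (p i)) := by
          rw [Finset.sum_range_sub (fun i ↦ ψ (p i)), hlast]; simp [hp]
      _ ≤ ∑ _i ∈ Finset.range (m + 1), C * ((b - a) / (m + 1)) ^ 2 := by
          refine Finset.sum_le_sum fun i hi ↦ ?_
          have hi := Finset.mem_range.1 hi
          have hstep : p (i + 1) - p i = (b - a) / (m + 1) := by simp only [hp]; push_cast; ring
          exact hstep ▸ hψ _ (hmem i hi.le) _ (hmem (i + 1) hi) (hmono i.le_succ)
      _ = C * (b - a) ^ 2 / (m + 1) := by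
          rw [Finset.sum_const, Finset.card_range, nsmul_eq_mul]; push_cast; field_simp
  have hlim := tendsto_const_div_atTop_nhds_zero_nat (C * (b - a) ^ 2)
  have hlim_succ := (Filter.tendsto_add_atTop_iff_nat 1).2 hlim
  exact sub_nonpos.1 (ge_of_tendsto' hlim_succ fun m ↦ by exact_mod_cast increment_le m)

variable {S : Set E} {f : E → ℝ} {g : E → E} {M L : ℝ}

lemma IsHybridOracle.linErr_le (hg : IsHybridOracle S f g M L) (hS : Convex ℝ S) {x u : E}
    (hx : x ∈ S) (hu : u ∈ S) : linErr f g x u ≤ 2 * M * ‖u - x‖ + L / 2 * ‖u - x‖ ^ 2 := by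
  set v := u - x
  have hmem (s : ℝ) (hs : s ∈ Set.Icc (0 : ℝ) 1) : x + s • v ∈ S :=
    hS.add_smul_sub_mem hx hu hs
  have hanti : AntitoneOn (fun s : ℝ ↦
      f (x + s • v) - s * ⟪g x, v⟫ - 2 * M * ‖v‖ * s - L / 2 * ‖v‖ ^ 2 * s ^ 2) (Set.Icc 0 1) := by
    refine antitoneOn_of_sub_le_mul_sq (C := L / 2 * ‖v‖ ^ 2) fun s hs t ht hst ↦ ?_
    have hsub := hg.subgradient _ (hmem t ht) _ (hmem s hs)
    have hosc : ⟪g (x + t • v) - g x, v⟫ ≤ (2 * M + L * (t * ‖v‖)) * ‖v‖ := by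
      refine (real_inner_le_norm _ _).trans (mul_le_mul_of_nonneg_right ?_ (norm_nonneg v))
      have := hg.norm_sub_le _ (hmem t ht) _ hx
      rwa [add_sub_cancel_left, norm_smul, Real.norm_of_nonneg ht.1] at this
    rw [show x + s • v - (x + t • v) = (s - t) • v by module, real_inner_smul_right] at hsub
    rw [inner_sub_left] at hosc
    nlinarith [mul_le_mul_of_nonneg_left hosc (sub_nonneg.2 hst)]
  have := hanti (Set.left_mem_Icc.2 zero_le_one) (Set.right_mem_Icc.2 zero_le_one) zero_le_one
  simp only [v, one_smul, zero_smul, add_zero, add_sub_cancel] at this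
  rw [linErr]
  linarith

end Descent

section Prox

lemma norm_sq_combo_sub {a b : ℝ} (hab : a + b = 1) (x y c : E) :
    ‖a • x + b • y - c‖ ^ 2 = a * ‖x - c‖ ^ 2 + b * ‖y - c‖ ^ 2 - a * b * ‖x - y‖ ^ 2 := by
  obtain rfl : b = 1 - a := by linarith
  rw [show a • x + (1 - a) • y - c = a • (x - c) + (1 - a) • (y - c) by module,
    ← sub_sub_sub_cancel_right x y c, norm_add_sq_real, norm_sub_sq_real (x - c),
    norm_smul, norm_smul, mul_pow, mul_pow, Real.norm_eq_abs, Real.norm_eq_abs, sq_abs, sq_abs,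
    real_inner_smul_left, real_inner_smul_right]
  ring

/-- The objective of the proximal subproblem of `G` with prox-center `c` and stepsize `lam`. -/
noncomputable def proxObj (G : E → ℝ) (c : E) (lam : ℝ) (u : E) : ℝ :=
  G u + ‖u - c‖ ^ 2 / (2 * lam)

lemma strongConvexOn_of_combo_le {S : Set E} (hS : Convex ℝ S) {m : ℝ} {G : E → ℝ}
    (hG : ∀ a ∈ S, ∀ b ∈ S, ∀ α : ℝ, 0 ≤ α → α ≤ 1 →
      G (α • a + (1 - α) • b) ≤ α * G a + (1 - α) * G b - α * (1 - α) * m / 2 * ‖a - b‖ ^ 2) :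
    StrongConvexOn S m G := by
  refine ⟨hS, fun a ha b hb α β hα hβ hαβ ↦ ?_⟩
  obtain rfl : β = 1 - α := by linarith
  refine (hG a ha b hb α hα (by linarith)).trans_eq ?_
  simp only [smul_eq_mul]
  ring

variable {S : Set E} {G : E → ℝ} {m lam : ℝ} {c x u : E}

lemma strongConvexOn_proxObj (hG : StrongConvexOn S m G) (c : E) (lam : ℝ) :
    StrongConvexOn S (m + 1 / lam) (proxObj G c lam) := by
  refine ⟨hG.1, fun x hx y hy a b ha hb hab ↦ ?_⟩
  have := hG.2 hx hy ha hb hab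
  simp only [smul_eq_mul, proxObj] at this ⊢
  rw [norm_sq_combo_sub hab]
  refine (add_le_add_left this _).trans_eq ?_
  ring

lemma add_sq_norm_le_of_isMinOn (hG : StrongConvexOn S m G) (hx : x ∈ S) (hmin : IsMinOn G S x)
    (hu : u ∈ S) : G x + m / 2 * ‖u - x‖ ^ 2 ≤ G u := by
  have chord_le (s : ℝ) (hs : s ∈ Set.Ioo (0 : ℝ) 1) :
      G x + (1 - s) * (m / 2 * ‖u - x‖ ^ 2) ≤ G u := by
    have hmem := hG.1 hu hx hs.1.le (sub_nonneg.2 hs.2.le) (add_sub_cancel s 1)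
    have := (hmin hmem).out.trans (hG.2 hu hx hs.1.le (sub_nonneg.2 hs.2.le) (add_sub_cancel s 1))
    simp only [smul_eq_mul] at this
    refine le_of_mul_le_mul_left ?_ hs.1
    linarith
  have hlim : Filter.Tendsto (fun s : ℝ ↦ G x + (1 - s) * (m / 2 * ‖u - x‖ ^ 2))
      (nhdsWithin 0 (Set.Ioi 0)) (nhds (G x + (1 - 0) * (m / 2 * ‖u - x‖ ^ 2))) :=
    (Continuous.tendsto (by fun_prop) 0).mono_left nhdsWithin_le_nhds
  have := le_of_tendsto hlim (Filter.eventually_of_mem (Ioo_mem_nhdsGT zero_lt_one) chord_le)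
  linarith

lemma proxObj_add_sq_norm_le (hG : StrongConvexOn S m G) (hx : x ∈ S)
    (hmin : IsMinOn (proxObj G c lam) S x) (hu : u ∈ S) :
    proxObj G c lam x + (m + 1 / lam) / 2 * ‖u - x‖ ^ 2 ≤ proxObj G c lam u :=
  add_sq_norm_le_of_isMinOn (strongConvexOn_proxObj hG c lam) hx hmin hu

end Prox

section Averaging

lemma sum_mul_norm_sq_sub {ι : Type*} {s : Finset ι} {w : ι → ℝ} (hw : ∑ i ∈ s, w i ≠ 0)
    (p : ι → E) (a : E) :
    ∑ i ∈ s, w i * ‖p i - a‖ ^ 2 =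
      ∑ i ∈ s, w i * ‖p i - s.centerMass w p‖ ^ 2
        + (∑ i ∈ s, w i) * ‖s.centerMass w p - a‖ ^ 2 := by
  set m := s.centerMass w p with hm
  have hbalance : ∑ i ∈ s, w i • (p i - m) = 0 := by
    simp only [smul_sub, Finset.sum_sub_distrib, ← Finset.sum_smul]
    rw [hm, Finset.centerMass, smul_inv_smul₀ hw, sub_self]
  have hcross : ∑ i ∈ s, w i * ⟪p i - m, m - a⟫ = 0 := by
    simp only [← real_inner_smul_left, ← sum_inner, hbalance, inner_zero_left]
  calc ∑ i ∈ s, w i * ‖p i - a‖ ^ 2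
      = ∑ i ∈ s, (w i * ‖p i - m‖ ^ 2 + 2 * (w i * ⟪p i - m, m - a⟫) + w i * ‖m - a‖ ^ 2) := by
        refine Finset.sum_congr rfl fun i _ ↦ ?_
        rw [← sub_add_sub_cancel (p i) m a, norm_add_sq_real]
        ring
    _ = _ := by
        rw [Finset.sum_add_distrib, Finset.sum_add_distrib, ← Finset.mul_sum, hcross,
          ← Finset.sum_mul]
        ring

lemma exists_sum_mul_norm_sq_sub_le {ι : Type*} {s : Finset ι} {w : ι → ℝ}
    (hw : ∀ i ∈ s, 0 ≤ w i) {p : ι → E} {R : ℝ} (hp : ∀ i ∈ s, ∀ j ∈ s, ‖p i - p j‖ ≤ R) :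
    ∃ m : E, ∑ i ∈ s, w i * ‖p i - m‖ ^ 2 ≤ R ^ 2 / 2 * ∑ i ∈ s, w i := by
  rcases (Finset.sum_nonneg hw).eq_or_lt' with hzero | hpos
  · refine ⟨0, ?_⟩
    rw [hzero, mul_zero, Finset.sum_eq_zero fun i hi ↦ ?_]
    rw [(Finset.sum_eq_zero_iff_of_nonneg hw).1 hzero i hi, zero_mul]
  refine ⟨s.centerMass w p, ?_⟩
  set W := ∑ i ∈ s, w i
  set V := ∑ i ∈ s, w i * ‖p i - s.centerMass w p‖ ^ 2
  have hdouble : 2 * W * V = ∑ j ∈ s, w j * ∑ i ∈ s, w i * ‖p i - p j‖ ^ 2 := by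
    have hterm (j : ι) : w j * ∑ i ∈ s, w i * ‖p i - p j‖ ^ 2
        = w j * V + W * (w j * ‖p j - s.centerMass w p‖ ^ 2) := by
      rw [sum_mul_norm_sq_sub hpos.ne', norm_sub_rev (s.centerMass w p)]
      ring
    simp only [hterm, Finset.sum_add_distrib, ← Finset.sum_mul, ← Finset.mul_sum]
    ring
  have hpairs : ∑ j ∈ s, w j * ∑ i ∈ s, w i * ‖p i - p j‖ ^ 2 ≤ ∑ j ∈ s, w j * (W * R ^ 2) := by
    simp only [W, Finset.sum_mul]
    gcongr with j hj i hi
    exacts [hw j hj, hw i hi, hp i hi j hj]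
  rw [← hdouble, ← Finset.sum_mul] at hpairs
  refine le_of_mul_le_mul_left (hpairs.trans_eq ?_) (by positivity : 0 < 2 * W)
  ring

end Averaging

lemma mul_sub_mul_sq_le (a z : ℝ) {b : ℝ} (hb : 0 < b) : a * z - b * z ^ 2 ≤ a ^ 2 / (4 * b) := by
  rw [le_div_iff₀ (by positivity)]
  linarith [sq_nonneg (a - 2 * b * z)]

/-- The inequalities obeyed by the gaps `t` along one run of null steps: `y 0` is the prox-center,
`y (i + 1)` the `i`-th iterate, `lam` the stepsize, and `ω = 1 - χ`. -/
structure GapRecursion (f : E → ℝ) (g : E → E) (ω lam : ℝ) (n : ℕ) (y : ℕ → E) (t : ℕ → ℝ) :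
    Prop where
  le_linErr : ∀ i ≤ n,
    t i ≤ linErr f g (y i) (y (i + 1)) - ω / (2 * lam) * ‖y (i + 1) - y 0‖ ^ 2
  decrease : ∀ i < n, t (i + 1) ≤ t i - ‖y (i + 2) - y (i + 1)‖ ^ 2 / (2 * lam)

section WeightedRecursion

variable {S : Set E} {f : E → ℝ} {g : E → E} {M L ω lam : ℝ} {n : ℕ} {y : ℕ → E} {t : ℕ → ℝ}

lemma linErr_le_linErr_sub_add (v : E) (x u z : E) :
    linErr f g x u ≤ linErr f (fun _ ↦ v) z u - linErr f (fun _ ↦ v) z x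
      + ‖g x - v‖ * ‖u - x‖ := by
  have := neg_le_of_abs_le (abs_real_inner_le_norm (g x - v) (u - x))
  simp only [linErr, inner_sub_left, inner_sub_right] at this ⊢
  linarith

lemma IsHybridOracle.neg_linErr_const_le (hg : IsHybridOracle S f g M L) (v : E) {x u : E}
    (hx : x ∈ S) (hu : u ∈ S) : -linErr f (fun _ ↦ v) x u ≤ ‖g x - v‖ * ‖u - x‖ := by
  have hsub := hg.subgradient x hx u hu
  have := neg_le_of_abs_le (abs_real_inner_le_norm (g x - v) (u - x))
  simp only [linErr, inner_sub_left] at this ⊢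
  linarith

lemma IsHybridOracle.linErr_const_le (hg : IsHybridOracle S f g M L) (v : E) {x u : E}
    (hx : x ∈ S) (hu : u ∈ S) : linErr f (fun _ ↦ v) x u ≤ ‖g u - v‖ * ‖u - x‖ := by
  have hsub := hg.subgradient u hu x hx
  have := le_of_abs_le (abs_real_inner_le_norm (g u - v) (u - x))
  rw [← neg_sub u x, inner_neg_right] at hsub
  simp only [linErr, inner_sub_left] at this ⊢
  linarith

/- The weights `(i + 1) * (i + 2) / 2` are the ones for which the linearization errors telescope,
whatever the reference slope `v`. -/
lemma GapRecursion.weighted_gap_le (ht : GapRecursion f g ω lam n y t)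
    (hg : IsHybridOracle S f g M L) (hy : ∀ i ≤ n + 1, y i ∈ S) (hω : 0 < ω) (hω1 : ω ≤ 1)
    (hlam : 0 < lam) (v : E) {i : ℕ} (hi : i ≤ n) :
    (i + 1) * (i + 2) / 2 * t i ≤
      (i + 1) * linErr f (fun _ ↦ v) (y 0) (y (i + 1))
        - (i + 1 / 2) * (ω / (2 * lam)) * ‖y (i + 1) - y 0‖ ^ 2
        + lam / ω * ((1 + ∑ k ∈ Finset.range i, 1 / (2 * (k : ℝ) + 1)) * ‖g (y 0) - v‖ ^ 2
          + ∑ k ∈ Finset.range i, (1 + 1 / ((k : ℝ) + 1)) * ‖g (y (k + 1)) - v‖ ^ 2) := by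
  induction i with
  | zero =>
    have hlin := linErr_le_linErr_sub_add (f := f) (g := g) v (y 0) (y 1) (y 0)
    have hself : linErr f (fun _ ↦ v) (y 0) (y 0) = 0 := by simp [linErr]
    have hquad := mul_sub_mul_sq_le ‖g (y 0) - v‖ ‖y 1 - y 0‖
      (b := 1 / 2 * (ω / (2 * lam))) (by positivity)
    rw [show ‖g (y 0) - v‖ ^ 2 / (4 * (1 / 2 * (ω / (2 * lam)))) = lam / ω * ‖g (y 0) - v‖ ^ 2 by
      field_simp; norm_num] at hquad
    have := ht.le_linErr 0 hi
    norm_num at this ⊢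
    linarith
  | succ i ih =>
    have hstart := mul_sub_mul_sq_le ‖g (y 0) - v‖ ‖y (i + 1) - y 0‖
      (b := (i + 1 / 2) * (ω / (2 * lam))) (by positivity)
    rw [show ‖g (y 0) - v‖ ^ 2 / (4 * ((i + 1 / 2) * (ω / (2 * lam))))
      = lam / ω * (1 / (2 * i + 1) * ‖g (y 0) - v‖ ^ 2) by field_simp; ring] at hstart
    have hstep := mul_sub_mul_sq_le ((i + 2) * ‖g (y (i + 1)) - v‖) ‖y (i + 2) - y (i + 1)‖
      (b := (i + 1) * (i + 2) / 2 / (2 * lam)) (by positivity)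
    replace hstep := hstep.trans <|
      calc ((i + 2) * ‖g (y (i + 1)) - v‖) ^ 2 / (4 * ((i + 1) * (i + 2) / 2 / (2 * lam)))
        _ = lam / 1 * ((1 + 1 / (i + 1)) * ‖g (y (i + 1)) - v‖ ^ 2) := by field_simp; ring
        _ ≤ lam / ω * ((1 + 1 / (i + 1)) * ‖g (y (i + 1)) - v‖ ^ 2) := by gcongr
    have hlin := linErr_le_linErr_sub_add (f := f) (g := g) v (y (i + 1)) (y (i + 2)) (y 0)
    have hneg := hg.neg_linErr_const_le v (hy 0 (by lia)) (hy (i + 1) (by lia))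
    have hdecr := mul_le_mul_of_nonneg_left (ht.decrease i (by lia))
      (by positivity : (0 : ℝ) ≤ (i + 1) * (i + 2) / 2)
    have herr := mul_le_mul_of_nonneg_left ((ht.le_linErr (i + 1) hi).trans
      (sub_le_sub_right hlin _)) (by positivity : (0 : ℝ) ≤ i + 2)
    rw [Finset.sum_range_succ, Finset.sum_range_succ]
    have hprox : 0 ≤ ω / (2 * lam) * ‖y (i + 2) - y 0‖ ^ 2 := by positivity
    push_cast
    linear_combination ih (by lia) + hstart + hneg + hdecr + herr + hstep + hprox / 2

end WeightedRecursion

section WeightedRecursion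
variable {S : Set E} {f : E → ℝ} {g : E → E} {M L ω lam : ℝ} {n : ℕ} {y : ℕ → E} {t : ℕ → ℝ}

/-- The weight that the deviation of the slope `g (y k)` carries in the bound on the gap after `n`
null steps: `k = 0` is the prox-center and `k = n + 1` the last iterate. -/
noncomputable def slopeWeight (n k : ℕ) : ℝ :=
  if k = 0 then 1 + ∑ i ∈ Finset.range n, 1 / (2 * (i : ℝ) + 1)
  else if k ≤ n then 1 + 1 / (k : ℝ) else ((n : ℝ) + 1) ^ 2 / (2 * n + 1)

lemma slopeWeight_nonneg (n k : ℕ) : 0 ≤ slopeWeight n k := by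
  unfold slopeWeight
  split_ifs <;> positivity

lemma sum_slopeWeight_mul (n : ℕ) (a : ℕ → ℝ) :
    ∑ k ∈ Finset.range (n + 2), slopeWeight n k * a k =
      (1 + ∑ k ∈ Finset.range n, 1 / (2 * (k : ℝ) + 1)) * a 0
        + ∑ k ∈ Finset.range n, (1 + 1 / ((k : ℝ) + 1)) * a (k + 1)
        + ((n : ℝ) + 1) ^ 2 / (2 * n + 1) * a (n + 1) := by
  rw [Finset.sum_range_succ, Finset.sum_range_succ', add_comm (Finset.sum _ _)]
  congr 1
  · congr 1
    refine Finset.sum_congr rfl fun k hk ↦ ?_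
    rw [slopeWeight, if_neg k.succ_ne_zero, if_pos (Nat.succ_le_of_lt (Finset.mem_range.1 hk)),
      Nat.cast_succ]
  · rw [slopeWeight, if_neg n.succ_ne_zero, if_neg n.not_succ_le_self]

lemma sum_harmonic_pair_le {m : ℕ} (hm : 10 ≤ m) :
    ∑ k ∈ Finset.range m, (1 / ((k : ℝ) + 1) + 1 / (2 * k + 1)) ≤ 37 / 10 + 7 / 50 * m := by
  induction m, hm using Nat.le_induction with
  | base => norm_num [Finset.sum_range_succ]
  | succ m hm ih =>
    have hm' : (10 : ℝ) ≤ m := by exact_mod_cast hm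
    have h1 : 1 / ((m : ℝ) + 1) ≤ 1 / 11 := by gcongr; linarith
    have h2 : 1 / (2 * (m : ℝ) + 1) ≤ 1 / 21 := by gcongr; linarith
    rw [Finset.sum_range_succ]
    push_cast
    linarith

lemma sum_slopeWeight_le {n : ℕ} (hn : 40 ≤ n) :
    ∑ k ∈ Finset.range (n + 2), slopeWeight n k ≤ 17 / 10 * (n + 2) := by
  have hn' : (40 : ℝ) ≤ n := by exact_mod_cast hn
  have hlast : ((n : ℝ) + 1) ^ 2 / (2 * n + 1) ≤ n / 2 + 19 / 25 := by
    rw [div_le_iff₀ (by positivity)]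
    linarith
  have hsum := sum_slopeWeight_mul n 1
  have hharm := sum_harmonic_pair_le (by lia : 10 ≤ n)
  simp only [Pi.one_apply, mul_one, Finset.sum_add_distrib, Finset.sum_const, Finset.card_range,
    nsmul_eq_mul] at hsum hharm
  linarith

lemma GapRecursion.gap_le_sum_slopeWeight (ht : GapRecursion f g ω lam n y t)
    (hg : IsHybridOracle S f g M L) (hy : ∀ i ≤ n + 1, y i ∈ S) (hω : 0 < ω) (hω1 : ω ≤ 1)
    (hlam : 0 < lam) (v : E) :
    (n + 1) * (n + 2) / 2 * t n ≤
      lam / ω * ∑ k ∈ Finset.range (n + 2), slopeWeight n k * ‖g (y k) - v‖ ^ 2 := by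
  have hrec := ht.weighted_gap_le hg hy hω hω1 hlam v le_rfl
  have hlast := hg.linErr_const_le v (hy 0 (by lia)) (hy (n + 1) le_rfl)
  have hquad := mul_sub_mul_sq_le ((n + 1) * ‖g (y (n + 1)) - v‖) ‖y (n + 1) - y 0‖
    (b := (n + 1 / 2) * (ω / (2 * lam))) (by positivity)
  rw [show ((n + 1) * ‖g (y (n + 1)) - v‖) ^ 2 / (4 * ((n + 1 / 2) * (ω / (2 * lam))))
    = lam / ω * (((n : ℝ) + 1) ^ 2 / (2 * n + 1) * ‖g (y (n + 1)) - v‖ ^ 2) by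
      field_simp; ring] at hquad
  rw [sum_slopeWeight_mul n fun k ↦ ‖g (y k) - v‖ ^ 2]
  linear_combination hrec + (n + 1 : ℝ) * hlast + hquad

lemma GapRecursion.gap_le_of_norm_sub_le (ht : GapRecursion f g ω lam n y t)
    (hg : IsHybridOracle S f g M L) (hy : ∀ i ≤ n + 1, y i ∈ S) (hω : 0 < ω) (hω1 : ω ≤ 1)
    (hlam : 0 < lam) (hn : 40 ≤ n) {R : ℝ} (hR : ∀ a ∈ S, ∀ b ∈ S, ‖g a - g b‖ ≤ R) :
    t n ≤ 17 / 10 * (lam / ω) * R ^ 2 / (n + 1) := by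
  have hmem (k : ℕ) (hk : k ∈ Finset.range (n + 2)) : y k ∈ S :=
    hy k (Nat.lt_succ_iff.1 (Finset.mem_range.1 hk))
  obtain ⟨v, hv⟩ := exists_sum_mul_norm_sq_sub_le (s := Finset.range (n + 2)) (p := g ∘ y)
    (fun k _ ↦ slopeWeight_nonneg n k) fun i hi j hj ↦ hR _ (hmem i hi) _ (hmem j hj)
  have : (n + 1) * (n + 2) / 2 * t n
      ≤ (n + 1) * (n + 2) / 2 * (17 / 10 * (lam / ω) * R ^ 2 / (n + 1)) :=
    calc (n + 1) * (n + 2) / 2 * t n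
        ≤ lam / ω * ∑ k ∈ Finset.range (n + 2), slopeWeight n k * ‖g (y k) - v‖ ^ 2 :=
          ht.gap_le_sum_slopeWeight hg hy hω hω1 hlam v
      _ ≤ lam / ω * (R ^ 2 / 2 * (17 / 10 * (n + 2))) :=
          mul_le_mul_of_nonneg_left (hv.trans (by gcongr; exact sum_slopeWeight_le hn))
            (by positivity)
      _ = _ := by field_simp
  exact le_of_mul_le_mul_left this (by positivity)

end WeightedRecursion

section Potential

/-- A potential that grows by one whenever a positive gap `s` drops to `t` with
`t ^ 2 / (a + b * t) ≤ s - t`. -/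
noncomputable def gapPotential (a b t : ℝ) : ℝ := a / t - (b + 1) * Real.log t

lemma gapPotential_antitoneOn {a b : ℝ} (ha : 0 ≤ a) (hb : 0 ≤ b) :
    AntitoneOn (gapPotential a b) (Set.Ioi 0) := fun s hs t _ hst ↦ by
  have hs' : 0 < s := hs
  unfold gapPotential
  gcongr

lemma gapPotential_add_one_le {a b s t : ℝ} (ha : 0 < a) (hb : 0 ≤ b) (ht : 0 < t)
    (hdrop : t ^ 2 / (a + b * t) ≤ s - t) : gapPotential a b s + 1 ≤ gapPotential a b t := by
  have hden : 0 < a + b * t := by positivity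
  have hs : 0 < s := by linarith [div_pos (pow_pos ht 2) hden]
  have hlog : 1 - t / s ≤ Real.log s - Real.log t := by
    have := Real.one_sub_inv_le_log_of_pos (div_pos hs ht)
    rwa [inv_div, Real.log_div hs.ne' ht.ne'] at this
  have hone : 1 ≤ (a / t + b + 1) * (1 - t / s) := by
    rw [div_le_iff₀ hden] at hdrop
    rw [show (a / t + b + 1) * (1 - t / s) = (a + (b + 1) * t) * (s - t) / (t * s) by
      field_simp; ring, one_le_div (by positivity)]
    linarith
  have hfrac : a / t - a / s = a / t * (1 - t / s) := by field_simp
  unfold gapPotential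
  linarith [mul_le_mul_of_nonneg_left hlog (by linarith : 0 ≤ b + 1)]

lemma sq_le_sq_mul_of_le_hybrid {t d M L : ℝ} (ht : 0 ≤ t)
    (htd : t ≤ 2 * M * d + L / 2 * d ^ 2) : t ^ 2 ≤ d ^ 2 * (4 * M ^ 2 + L * t) := by
  rcases le_total t (L * d ^ 2 / 2) with hsmall | hlarge
  · have := mul_le_mul_of_nonneg_left hsmall ht
    nlinarith [sq_nonneg (d * M)]
  · have : (t - L * d ^ 2 / 2) ^ 2 ≤ (2 * M * d) ^ 2 :=
      pow_le_pow_left₀ (sub_nonneg.2 hlarge) (by linarith) 2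
    linarith [sq_nonneg (L * d ^ 2)]

variable {S : Set E} {f : E → ℝ} {g : E → E} {M L ω lam : ℝ} {n : ℕ} {y : ℕ → E} {t : ℕ → ℝ}

lemma GapRecursion.gap_le_hybrid (ht : GapRecursion f g ω lam n y t)
    (hg : IsHybridOracle S f g M L) (hS : Convex ℝ S) (hy : ∀ i ≤ n + 1, y i ∈ S)
    {i : ℕ} (hi : i ≤ n) :
    t i ≤ 2 * M * ‖y (i + 1) - y i‖ + L / 2 * ‖y (i + 1) - y i‖ ^ 2
      - ω / (2 * lam) * ‖y (i + 1) - y 0‖ ^ 2 :=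
  (ht.le_linErr i hi).trans
    (sub_le_sub_right (hg.linErr_le hS (hy i (by lia)) (hy (i + 1) (by lia))) _)

lemma GapRecursion.gapPotential_succ (ht : GapRecursion f g ω lam n y t)
    (hg : IsHybridOracle S f g M L) (hS : Convex ℝ S) (hy : ∀ i ≤ n + 1, y i ∈ S) (hM : 0 < M)
    (hL : 0 ≤ L) (hω : 0 ≤ ω) (hlam : 0 < lam) {i : ℕ} (hi : i < n) (hpos : 0 < t (i + 1)) :
    gapPotential (8 * lam * M ^ 2) (2 * lam * L) (t i) + 1
      ≤ gapPotential (8 * lam * M ^ 2) (2 * lam * L) (t (i + 1)) := by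
  refine gapPotential_add_one_le (by positivity) (by positivity) hpos ?_
  have hprox : 0 ≤ ω / (2 * lam) * ‖y (i + 2) - y 0‖ ^ 2 := by positivity
  have hsq := sq_le_sq_mul_of_le_hybrid hpos.le
    ((ht.gap_le_hybrid hg hS hy hi).trans (sub_le_self _ hprox))
  refine le_trans ?_ (le_sub_comm.1 (ht.decrease i hi))
  rw [div_le_div_iff₀ (by positivity) (by positivity)]
  linear_combination (2 * lam) * hsq

lemma GapRecursion.gapPotential_add_le (ht : GapRecursion f g ω lam n y t)
    (hg : IsHybridOracle S f g M L) (hS : Convex ℝ S) (hy : ∀ i ≤ n + 1, y i ∈ S) (hM : 0 < M)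
    (hL : 0 ≤ L) (hω : 0 ≤ ω) (hlam : 0 < lam) {T : ℝ} (hT : 0 < T) {i : ℕ} (hi : i ≤ n)
    (hTt : T ≤ t i) :
    T ≤ t 0 ∧ gapPotential (8 * lam * M ^ 2) (2 * lam * L) (t 0) + i
      ≤ gapPotential (8 * lam * M ^ 2) (2 * lam * L) T := by
  suffices T ≤ t 0 ∧ gapPotential (8 * lam * M ^ 2) (2 * lam * L) (t 0) + i
      ≤ gapPotential (8 * lam * M ^ 2) (2 * lam * L) (t i) from
    ⟨this.1, this.2.trans (gapPotential_antitoneOn (by positivity) (by positivity) hT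
      (hT.trans_le hTt) hTt)⟩
  induction i with
  | zero => simpa using hTt
  | succ i ih =>
    have hdecr : t (i + 1) ≤ t i :=
      (ht.decrease i hi).trans (sub_le_self _ (by positivity))
    have hstep := ht.gapPotential_succ hg hS hy hM hL hω hlam hi (hT.trans_le hTt)
    obtain ⟨hT0, hsum⟩ := ih (by lia) (hTt.trans hdecr)
    push_cast
    exact ⟨hT0, by linarith⟩

end Potential

section PotentialDrop

variable {a k s y ω B N r : ℝ}

lemma log_le_div_four_add (hr : 0 < r) : Real.log r ≤ r / 4 + 2 / 5 := by
  have hlog := Real.log_le_sub_one_of_pos (div_pos hr four_pos)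
  rw [Real.log_div hr.ne' four_ne_zero, show (4 : ℝ) = 2 ^ 2 by norm_num, Real.log_pow] at hlog
  push_cast at hlog
  linarith [Real.log_two_lt_d9]

lemma log_lt_three (hr : 0 < r) (hr20 : r ≤ 20) : Real.log r < 3 := by
  rw [Real.log_lt_iff_lt_exp hr]
  calc r ≤ 20 := hr20
    _ < 2.7182818283 ^ 3 := by norm_num
    _ ≤ Real.exp 1 ^ 3 := by gcongr; exact Real.exp_one_gt_d9.le
    _ = Real.exp 3 := by rw [← Real.exp_nat_mul]; norm_num

lemma potentialDrop_lt_of_le_half_of_sixteen_le (ha : 0 < a) (hk : 0 ≤ k) (hk' : k ≤ 1 / 2)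
    (hω : 0 < ω) (hω1 : ω ≤ 1) (hB : 16 ≤ B) (hbudget : B * (a + 2 * k) ≤ ω * N) (hr : 1 ≤ r)
    (hra : r * (ω - ω * k) ≤ 2 * a) :
    8 * a * (1 - 1 / r) + (2 * (ω * k) + 1) * Real.log r < N - 1 := by
  have hmass : 16 * (a + 2 * k) ≤ ω * N :=
    (mul_le_mul_of_nonneg_right hB (by positivity)).trans hbudget
  have hN : 0 < N := pos_of_mul_pos_right (by linarith) hω.le
  have hrN : r ≤ N / 4 := by
    have : ω * r * k ≤ ω * r * (1 / 2) := by gcongr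
    refine le_of_mul_le_mul_left ?_ hω
    linarith
  have hlog : Real.log r ≤ N / 4 - 1 :=
    (Real.log_le_sub_one_of_pos (by linarith)).trans (by linarith)
  have hslope : 8 * a * (1 - 1 / r) ≤ N / 2 := by
    have : 0 ≤ 8 * a * (1 / r) := by positivity
    linarith [mul_le_mul_of_nonneg_right hω1 hN.le]
  have hcoef : 2 * (ω * k) + 1 ≤ 2 := by linarith [mul_le_mul hω1 hk' hk zero_le_one]
  linarith [mul_le_mul hcoef hlog (Real.log_nonneg hr) zero_le_two]

lemma potentialDrop_lt_of_le_half_of_le_forty (ha : 0 < a) (hk : 0 ≤ k) (hk' : k ≤ 1 / 2)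
    (hω : 0 < ω) (hω1 : ω ≤ 1) (hB : 8 ≤ B) (hN : N ≤ 40)
    (hbudget : B * (a + 2 * k) ≤ ω * N) (hr : 1 ≤ r) (hra : r * (ω - ω * k) ≤ 2 * a) :
    8 * a * (1 - 1 / r) + (2 * (ω * k) + 1) * Real.log r < N - 1 := by
  have hmass : 8 * (a + 2 * k) ≤ ω * N :=
    (mul_le_mul_of_nonneg_right hB (by positivity)).trans hbudget
  have hN0 : 0 < N := pos_of_mul_pos_right (by linarith) hω.le
  have hrN : r ≤ N / 2 := by
    have : ω * r * k ≤ ω * r * (1 / 2) := by gcongr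
    refine le_of_mul_le_mul_left ?_ hω
    linarith
  have hlog3 := log_lt_three (r := r) (by linarith) (by linarith)
  have hlogN : Real.log r ≤ N / 2 - 1 :=
    (Real.log_le_sub_one_of_pos (by linarith)).trans (by linarith)
  have hωk : ω * k ≤ k := mul_le_of_le_one_left hk hω1
  have hslope : 8 * a * (1 - 1 / r) ≤ ω * N - 16 * k - 4 * (ω - ω * k) := by
    have : ω - ω * k ≤ 2 * a / r := (le_div_iff₀ (by linarith)).2 (by linarith)
    rw [mul_sub, mul_one, mul_one_div, show 8 * a / r = 4 * (2 * a / r) by ring]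
    linarith
  have hcurv : ω * k * Real.log r ≤ k * 3 :=
    mul_le_mul hωk hlog3.le (Real.log_nonneg hr) hk
  rcases le_total 4 N with h4 | h4
  · linarith [mul_le_mul_of_nonneg_right hω1 (sub_nonneg.2 h4)]
  · linarith [mul_nonneg hω.le (sub_nonneg.2 h4)]

lemma potentialDrop_lt_of_half_lt_of_sixteen_le (ha : 0 < a) (hk : 1 / 2 < k)
    (hω1 : ω ≤ 1) (hy : 0 ≤ y) (hB : 16 ≤ B) (hBy : B = 8 + 12 * Real.log (1 + y))
    (hsy : s ^ 2 = y * N) (hbudget : B * (a + 2 * k) ≤ N) (hr : 1 ≤ r)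
    (hra : r * k * B ≤ 8 * s + 8 * y) :
    8 * a * (1 - 1 / r) + (2 * (ω * k) + 1) * Real.log r < N - 1 := by
  have hk0 : 0 < k := by linarith
  have hmass : 16 * (a + 2 * k) ≤ N :=
    (mul_le_mul_of_nonneg_right hB (by linarith)).trans hbudget
  have hkB : 2 * (k * B) ≤ N := by linarith [mul_pos ha (by linarith : 0 < B)]
  obtain ⟨z, rfl⟩ : ∃ z, N = z * k := ⟨N / k, (div_mul_cancel₀ N (by linarith)).symm⟩
  have hz : 2 ≤ z := le_of_mul_le_mul_right (by linarith) (by linarith : 0 < k)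
  have hs : s ≤ k * y + z * k / 2 := by
    refine (abs_le_of_sq_le_sq' ?_ (by positivity)).2
    nlinarith [sq_nonneg (k * y - z * k / 2), mul_nonneg hy (mul_nonneg (by linarith) hk0.le)]
  have hrz : r ≤ (1 + y) * (1 + z / 4) := by
    refine le_of_mul_le_mul_left ?_ (by linarith : 0 < 2 * k)
    have hrk : r * k * 16 ≤ r * k * B := mul_le_mul_of_nonneg_left hB (by positivity)
    nlinarith [mul_nonneg hy (sub_nonneg.2 hz), mul_nonneg hy hk0.le]
  have hlog : Real.log r ≤ (B - 8) / 12 + (z / 16 + 13 / 20) := by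
    refine (Real.log_le_log (by linarith) hrz).trans ?_
    rw [Real.log_mul (by positivity) (by positivity)]
    linarith [log_le_div_four_add (r := 1 + z / 4) (by positivity)]
  have hslope : 8 * a * (1 - 1 / r) ≤ 8 * a := by
    have : 0 ≤ 8 * a * (1 / r) := by positivity
    linarith
  have hcoef : 2 * (ω * k) + 1 ≤ 4 * k := by linarith [mul_le_mul_of_nonneg_right hω1 hk0.le]
  linarith [mul_le_mul hcoef hlog (Real.log_nonneg hr) (by linarith)]

lemma potentialDrop_lt_of_half_lt_of_le_forty (ha : 0 < a) (hk : 1 / 2 < k)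
    (hω1 : ω ≤ 1) (hy : y ≤ 1) (hB : 8 ≤ B) (hN : N ≤ 40) (hsy : s ^ 2 = y * N)
    (hbudget : B * (a + 2 * k) ≤ N) (hr : 1 ≤ r) (hra : r * k * B ≤ 8 * s + 8 * y) :
    8 * a * (1 - 1 / r) + (2 * (ω * k) + 1) * Real.log r < N - 1 := by
  have hk0 : 0 < k := by linarith
  have hmass : 8 * (a + 2 * k) ≤ N :=
    (mul_le_mul_of_nonneg_right hB (by linarith)).trans hbudget
  have hs : s ≤ 7 := by
    refine (abs_le_of_sq_le_sq' ?_ (by norm_num)).2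
    linarith [mul_le_mul_of_nonneg_right hy (by linarith : 0 ≤ N)]
  have hrk : r * k * 8 ≤ r * k * B := mul_le_mul_of_nonneg_left hB (by positivity)
  have hr20 : r ≤ 20 := by linarith [mul_le_mul_of_nonneg_left hk.le (by linarith : 0 ≤ r)]
  have hlog3 := log_lt_three (r := r) (by linarith) hr20
  have hslope : 8 * a * (1 - 1 / r) ≤ 8 * a := by
    have : 0 ≤ 8 * a * (1 / r) := by positivity
    linarith
  have hcoef : 2 * (ω * k) + 1 ≤ 4 * k := by linarith [mul_le_mul_of_nonneg_right hω1 hk0.le]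
  linarith [mul_le_mul hcoef hlog3.le (Real.log_nonneg hr) (by linarith)]

end PotentialDrop

section CycleBound

/-- The logarithmic factor of the complexity bound (written `B` in the literature) for oracle
constants `M`, `L`, diameter `D` and cycle length `N`. -/
noncomputable def logFactor (M L D N : ℝ) : ℝ :=
  8 + 12 * Real.log (1 + L ^ 2 * D ^ 2 * N / (16 * M ^ 2))

variable {M L D N : ℝ}

lemma eight_le_logFactor (M L D : ℝ) (hN : 0 ≤ N) : 8 ≤ logFactor M L D N := by
  have : 0 ≤ Real.log (1 + L ^ 2 * D ^ 2 * N / (16 * M ^ 2)) :=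
    Real.log_nonneg (le_add_of_nonneg_right (by positivity))
  unfold logFactor
  linarith

lemma sixteen_le_logFactor (h : 1 ≤ L ^ 2 * D ^ 2 * N / (16 * M ^ 2)) :
    16 ≤ logFactor M L D N := by
  have : Real.log 2 ≤ Real.log (1 + L ^ 2 * D ^ 2 * N / (16 * M ^ 2)) :=
    Real.log_le_log two_pos (by linarith)
  unfold logFactor
  linarith [Real.log_two_gt_d9]

lemma sq_add_le_logFactor (hM : 0 < M) (hN : 41 ≤ N)
    (h : L ^ 2 * D ^ 2 * N / (16 * M ^ 2) ≤ 1) :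
    17 / 10 * (2 * M + L * D) ^ 2 ≤ M ^ 2 * logFactor M L D N := by
  set y := L ^ 2 * D ^ 2 * N / (16 * M ^ 2) with hy
  have hy0 : 0 ≤ y := by positivity
  have hlog : y / 2 ≤ Real.log (1 + y) := by
    refine le_trans ?_ (Real.one_sub_inv_le_log_of_pos (by positivity))
    rw [show 1 - (1 + y)⁻¹ = y / (1 + y) by field_simp; ring]
    gcongr
    linarith
  have hyLD : 41 * (L * D) ^ 2 ≤ 16 * (M ^ 2 * y) := by
    calc 41 * (L * D) ^ 2 ≤ N * (L * D) ^ 2 := by gcongr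
      _ = 16 * (M ^ 2 * y) := by rw [hy]; field_simp
  have := mul_le_mul_of_nonneg_left hlog (sq_nonneg M)
  unfold logFactor
  nlinarith [sq_nonneg (M - 3 * (L * D))]

variable {S : Set E} {f : E → ℝ} {g : E → E} {ω lam T : ℝ} {n : ℕ} {y : ℕ → E} {t : ℕ → ℝ}

lemma GapRecursion.gap_le_of_forty_le (ht : GapRecursion f g ω lam n y t)
    (hg : IsHybridOracle S f g M L) (hy : ∀ i ≤ n + 1, y i ∈ S)
    (hD : ∀ a ∈ S, ∀ b ∈ S, ‖a - b‖ ≤ D) (hM : 0 < M) (hL : 0 ≤ L) (hω : 0 < ω) (hω1 : ω ≤ 1)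
    (hlam : 0 < lam) (hn : 40 ≤ n) (hsmall : L ^ 2 * D ^ 2 * (n + 1) / (16 * M ^ 2) ≤ 1)
    (hbudget : logFactor M L D (n + 1) * (lam * M ^ 2) ≤ ω * T * (n + 1)) : t n ≤ T := by
  have hn' : (40 : ℝ) ≤ n := by exact_mod_cast hn
  have hosc (a : E) (ha : a ∈ S) (b : E) (hb : b ∈ S) : ‖g a - g b‖ ≤ 2 * M + L * D :=
    (hg.norm_sub_le a ha b hb).trans (by gcongr; exact hD a ha b hb)
  refine (ht.gap_le_of_norm_sub_le hg hy hω hω1 hlam hn hosc).trans ?_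
  rw [div_le_iff₀ (by positivity)]
  calc 17 / 10 * (lam / ω) * (2 * M + L * D) ^ 2
      = lam / ω * (17 / 10 * (2 * M + L * D) ^ 2) := by ring
    _ ≤ lam / ω * (M ^ 2 * logFactor M L D (n + 1)) := by
        exact mul_le_mul_of_nonneg_left (sq_add_le_logFactor hM (by linarith) hsmall)
          (by positivity)
    _ ≤ T * (n + 1) := by
        rw [div_mul_eq_mul_div, div_le_iff₀ hω]; linarith

lemma GapRecursion.gap_zero_mul_le (ht : GapRecursion f g ω lam n y t)
    (hg : IsHybridOracle S f g M L) (hS : Convex ℝ S) (hy : ∀ i ≤ n + 1, y i ∈ S)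
    (hlam : 0 < lam) (hcurv : lam * L < ω) : t 0 * (ω - lam * L) ≤ 2 * (lam * M ^ 2) := by
  have hgap := ht.gap_le_hybrid hg hS hy n.zero_le
  have hquad := mul_sub_mul_sq_le (2 * M) ‖y 1 - y 0‖ (b := (ω - lam * L) / (2 * lam))
    (div_pos (sub_pos.2 hcurv) (by positivity))
  have hcoef : (ω - lam * L) / (2 * lam) = ω / (2 * lam) - L / 2 := by field_simp
  have hle : t 0 ≤ (2 * M) ^ 2 / (4 * ((ω - lam * L) / (2 * lam))) := by
    rw [zero_add] at hgap
    refine le_trans ?_ hquad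
    rw [hcoef]
    linarith
  have := sub_pos.2 hcurv
  refine (mul_le_mul_of_nonneg_right hle this.le).trans_eq ?_
  field_simp
  ring

lemma GapRecursion.gap_zero_le (ht : GapRecursion f g ω lam n y t)
    (hg : IsHybridOracle S f g M L) (hS : Convex ℝ S) (hy : ∀ i ≤ n + 1, y i ∈ S)
    (hD : ∀ a ∈ S, ∀ b ∈ S, ‖a - b‖ ≤ D) (hM : 0 ≤ M) (hL : 0 ≤ L) (hω : 0 ≤ ω) (hlam : 0 < lam) :
    t 0 ≤ 2 * M * D + L / 2 * D ^ 2 := by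
  have hprox : 0 ≤ ω / (2 * lam) * ‖y 1 - y 0‖ ^ 2 := by positivity
  refine ((ht.gap_le_hybrid hg hS hy n.zero_le).trans (sub_le_self _ hprox)).trans ?_
  gcongr <;> exact hD _ (hy 1 (by lia)) _ (hy 0 (by lia))

lemma gapPotential_sub {a b s T : ℝ} (hs : 0 < s) (hT : 0 < T) :
    gapPotential a b T - gapPotential a b s
      = a / T * (1 - 1 / (s / T)) + (b + 1) * Real.log (s / T) := by
  rw [gapPotential, gapPotential, Real.log_div hs.ne' hT.ne']
  field_simp
  ring

lemma GapRecursion.gap_zero_div_mul_le (ht : GapRecursion f g ω lam n y t)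
    (hg : IsHybridOracle S f g M L) (hS : Convex ℝ S) (hy : ∀ i ≤ n + 1, y i ∈ S)
    (hD : ∀ a ∈ S, ∀ b ∈ S, ‖a - b‖ ≤ D) (hM : 0 < M) (hL : 0 ≤ L) (hω : 0 < ω) (hlam : 0 < lam)
    (hT : 0 < T) {B N : ℝ} (hB : 0 ≤ B) (hbudget : B * (lam * M ^ 2 / T) ≤ ω * N) :
    t 0 / T * (lam * L / ω) * B
      ≤ 8 * (L * D * N / (4 * M)) + 8 * (L ^ 2 * D ^ 2 * N / (16 * M ^ 2)) := by
  have hD0 : 0 ≤ D := (norm_nonneg _).trans (hD _ (hy 0 (by lia)) _ (hy 0 (by lia)))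
  calc t 0 / T * (lam * L / ω) * B
      = t 0 * (L / (ω * M ^ 2) * (B * (lam * M ^ 2 / T))) := by field_simp
    _ ≤ (2 * M * D + L / 2 * D ^ 2) * (L / (ω * M ^ 2) * (B * (lam * M ^ 2 / T))) := by
        gcongr
        exact ht.gap_zero_le hg hS hy hD hM.le hL hω.le hlam
    _ ≤ (2 * M * D + L / 2 * D ^ 2) * (L / (ω * M ^ 2) * (ω * N)) := by gcongr
    _ = 8 * (L * D * N / (4 * M)) + 8 * (L ^ 2 * D ^ 2 * N / (16 * M ^ 2)) := by
        field_simp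
        ring

lemma GapRecursion.gapPotential_sub_lt (ht : GapRecursion f g ω lam n y t)
    (hg : IsHybridOracle S f g M L) (hS : Convex ℝ S) (hy : ∀ i ≤ n + 1, y i ∈ S)
    (hD : ∀ a ∈ S, ∀ b ∈ S, ‖a - b‖ ≤ D) (hM : 0 < M) (hL : 0 ≤ L) (hω : 0 < ω) (hω1 : ω ≤ 1)
    (hlam : 0 < lam) (hT : 0 < T) (hT0 : T ≤ t 0)
    (hsize : 16 ≤ logFactor M L D (n + 1) ∨
      (L ^ 2 * D ^ 2 * (n + 1) / (16 * M ^ 2) ≤ 1 ∧ (n + 1 : ℝ) ≤ 40))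
    (hbudget : logFactor M L D (n + 1) * (lam * M ^ 2 / T + 2 * (lam * L / ω)) ≤ ω * (n + 1)) :
    gapPotential (8 * lam * M ^ 2) (2 * lam * L) T
      - gapPotential (8 * lam * M ^ 2) (2 * lam * L) (t 0) < n := by
  set B := logFactor M L D (n + 1)
  set a := lam * M ^ 2 / T with ha
  set k := lam * L / ω
  set q := L ^ 2 * D ^ 2 * (n + 1) / (16 * M ^ 2) with hq
  have hB8 : 8 ≤ B := eight_le_logFactor M L D (by positivity)
  have ha0 : 0 < a := by positivity
  have hk0 : 0 ≤ k := by positivity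
  have hωk : ω * k = lam * L := mul_div_cancel₀ _ hω.ne'
  have hr : 1 ≤ t 0 / T := (one_le_div hT).2 hT0
  rw [gapPotential_sub (hT.trans_le hT0) hT, mul_assoc 2, ← hωk, ← add_sub_cancel_right (n : ℝ) 1,
    show 8 * lam * M ^ 2 / T = 8 * a by rw [ha]; ring]
  rcases le_or_gt k (1 / 2) with hk2 | hk2
  · have hra : t 0 / T * (ω - ω * k) ≤ 2 * a := by
      have := ht.gap_zero_mul_le hg hS hy hlam (by linarith [mul_le_mul_of_nonneg_left hk2 hω.le])
      rw [hωk, div_mul_eq_mul_div, ha, ← mul_div_assoc]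
      gcongr
    rcases hsize with hB16 | ⟨-, hn⟩
    · exact potentialDrop_lt_of_le_half_of_sixteen_le ha0 hk0 hk2 hω hω1 hB16 hbudget hr hra
    · exact potentialDrop_lt_of_le_half_of_le_forty ha0 hk0 hk2 hω hω1 hB8 hn hbudget hr hra
  · have hBa : B * a ≤ ω * (n + 1) := by linarith [mul_nonneg (by linarith : 0 ≤ B) hk0]
    have hra := ht.gap_zero_div_mul_le hg hS hy hD hM hL hω hlam hT (by linarith) hBa
    have hsq : (L * D * (n + 1) / (4 * M)) ^ 2 = q * (n + 1) := by rw [hq]; field_simp; norm_num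
    have hbudget' : B * (a + 2 * k) ≤ n + 1 :=
      hbudget.trans (mul_le_of_le_one_left (by positivity) hω1)
    rcases hsize with hB16 | ⟨hq1, hn⟩
    · exact potentialDrop_lt_of_half_lt_of_sixteen_le ha0 hk2 hω1 (by positivity) hB16 rfl hsq
        hbudget' hr hra
    · exact potentialDrop_lt_of_half_lt_of_le_forty ha0 hk2 hω1 hq1 hB8 hn hsq hbudget' hr hra

/- For long cycles of moderate curvature the weighted recursion is sharp enough; in all other
cases the growth of `gapPotential` over the cycle contradicts the size of the initial gap. -/
theorem GapRecursion.gap_le (ht : GapRecursion f g ω lam n y t)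
    (hg : IsHybridOracle S f g M L) (hS : Convex ℝ S) (hy : ∀ i ≤ n + 1, y i ∈ S)
    (hD : ∀ a ∈ S, ∀ b ∈ S, ‖a - b‖ ≤ D) (hM : 0 < M) (hL : 0 ≤ L) (hω : 0 < ω) (hω1 : ω ≤ 1)
    (hlam : 0 < lam) (hT : 0 < T)
    (hbudget : logFactor M L D (n + 1) * (lam * M ^ 2 / T + 2 * (lam * L / ω)) ≤ ω * (n + 1)) :
    t n ≤ T := by
  by_contra! hTt
  have hsize : 16 ≤ logFactor M L D (n + 1) ∨
      (L ^ 2 * D ^ 2 * (n + 1) / (16 * M ^ 2) ≤ 1 ∧ (n + 1 : ℝ) ≤ 40) := by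
    refine (le_or_gt 1 _).imp sixteen_le_logFactor fun hsmall ↦ ⟨hsmall.le, ?_⟩
    by_contra! hn
    refine hTt.not_ge (ht.gap_le_of_forty_le hg hy hD hM hL hω hω1 hlam
      (Nat.lt_succ_iff.1 (by exact_mod_cast hn)) hsmall.le ?_)
    have hB := eight_le_logFactor M L D (N := n + 1) (by positivity)
    have hcurv : 0 ≤ logFactor M L D (n + 1) * (2 * (lam * L / ω)) := by positivity
    rw [mul_right_comm, ← div_le_iff₀ hT, mul_div_assoc]
    linarith
  obtain ⟨hT0, hpot⟩ := ht.gapPotential_add_le hg hS hy hM hL hω.le hlam hT le_rfl hTt.le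
  have hdrop := ht.gapPotential_sub_lt hg hS hy hD hM hL hω hω1 hlam hT hT0 hsize hbudget
  linarith

end CycleBound

section Execution

/-- The model `F'` is an admissible successor of the model `F` after a null step at the iterate `x`:
it dominates the linearization of `f` at `x` and some convex `fbar` (an aggregate of `F`) whose
proximal subproblem has the same solution and value as that of `F`. -/
def IsNullUpdate (S : Set E) (f h : E → ℝ) (g : E → E) (c : E) (lam : ℝ) (x : E) (F F' : E → ℝ) :
    Prop :=
  ∃ fbar : E → ℝ, ConvexOn ℝ S fbar ∧ fbar x = F x ∧ IsMinOn (proxObj (fbar + h) c lam) S x ∧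
    (∀ u ∈ S, fbar u ≤ F' u) ∧ ∀ u ∈ S, f x + ⟪g x, u - x⟫ ≤ F' u

/-- An execution of U-PB on `f + h` over `S` with oracle `g`, parameter `χ`, gap threshold `T` for
serious steps and at most `K` iterations per cycle. Sequences are indexed by the inner iterations,
`counter j` is the inner counter before its increment in iteration `j`, and the execution is
not stopped at a nearly optimal iterate. -/
structure Run (S : Set E) (f h : E → ℝ) (g : E → E) (χ T : ℝ) (K : ℕ) where
  model : ℕ → E → ℝ
  iterate : ℕ → E
  center : ℕ → E
  stepsize : ℕ → ℝ
  counter : ℕ → ℕ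
  value : ℕ → ℝ
  gap : ℕ → ℝ
  length_pos : 0 < K
  center_zero_mem : center 0 ∈ S
  stepsize_zero_pos : 0 < stepsize 0
  counter_zero : counter 0 = 0
  model_convexOn : ∀ j, ConvexOn ℝ S (model j)
  model_le : ∀ j, ∀ u ∈ S, model j u ≤ f u
  linearization_le_model : ∀ j, counter j = 0 → ∀ u ∈ S,
    f (center j) + ⟪g (center j), u - center j⟫ ≤ model j u
  iterate_mem : ∀ j, iterate j ∈ S
  isMinOn_iterate : ∀ j, IsMinOn (proxObj (model j + h) (center j) (stepsize j)) S (iterate j)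
  value_of_counter_eq_zero : ∀ j, counter j = 0 → value j =
    f (iterate j) + h (iterate j) + χ / (2 * stepsize j) * ‖iterate j - center j‖ ^ 2
  value_of_counter_ne_zero : ∀ j, counter j ≠ 0 → value j = min (value (j - 1))
    (f (iterate j) + h (iterate j) + χ / (2 * stepsize j) * ‖iterate j - center j‖ ^ 2)
  gap_eq : ∀ j, gap j = value j - proxObj (model j + h) (center j) (stepsize j) (iterate j)
  null : ∀ j, T < gap j → counter j + 1 < K →
    center (j + 1) = center j ∧ stepsize (j + 1) = stepsize j ∧ counter (j + 1) = counter j + 1 ∧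
      IsNullUpdate S f h g (center j) (stepsize j) (iterate j) (model j) (model (j + 1))
  reset : ∀ j, T < gap j → counter j + 1 = K →
    center (j + 1) = center j ∧ stepsize (j + 1) = stepsize j / 2 ∧ counter (j + 1) = 0
  serious : ∀ j, gap j ≤ T →
    center (j + 1) = iterate j ∧ stepsize (j + 1) = stepsize j ∧ counter (j + 1) = 0

namespace Run

variable {S : Set E} {f h : E → ℝ} {g : E → E} {χ T : ℝ} {K : ℕ} (R : Run S f h g χ T K)

lemma counter_lt (j : ℕ) : R.counter j < K := by
  induction j with
  | zero => rw [R.counter_zero]; exact R.length_pos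
  | succ j ih =>
    rcases le_or_gt (R.gap j) T with hT | hT
    · exact (R.serious j hT).2.2 ▸ R.length_pos
    rcases (Nat.succ_le_of_lt ih).lt_or_eq with hK | hK
    · exact (R.null j hT hK).2.2.1 ▸ hK
    · exact (R.reset j hT hK).2.2 ▸ R.length_pos

lemma update_cases (j : ℕ) :
    (R.gap j ≤ T ∧ R.center (j + 1) = R.iterate j ∧ R.stepsize (j + 1) = R.stepsize j ∧
      R.counter (j + 1) = 0) ∨
    (T < R.gap j ∧ R.counter j + 1 < K ∧ R.center (j + 1) = R.center j ∧
      R.stepsize (j + 1) = R.stepsize j ∧ R.counter (j + 1) = R.counter j + 1) ∨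
    (T < R.gap j ∧ R.counter j + 1 = K ∧ R.center (j + 1) = R.center j ∧
      R.stepsize (j + 1) = R.stepsize j / 2 ∧ R.counter (j + 1) = 0) := by
  rcases le_or_gt (R.gap j) T with hT | hT
  · exact .inl ⟨hT, R.serious j hT⟩
  rcases (Nat.succ_le_of_lt (R.counter_lt j)).lt_or_eq with hK | hK
  · obtain ⟨hc, hlam, hN, -⟩ := R.null j hT hK
    exact .inr (.inl ⟨hT, hK, hc, hlam, hN⟩)
  · exact .inr (.inr ⟨hT, hK, R.reset j hT hK⟩)

lemma stepsize_pos (j : ℕ) : 0 < R.stepsize j := by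
  induction j with
  | zero => exact R.stepsize_zero_pos
  | succ j ih =>
    rcases R.update_cases j with ⟨-, -, h, -⟩ | ⟨-, -, -, h, -⟩ | ⟨-, -, -, h, -⟩ <;> rw [h]
    exacts [ih, ih, half_pos ih]

lemma center_mem (j : ℕ) : R.center j ∈ S := by
  induction j with
  | zero => exact R.center_zero_mem
  | succ j ih =>
    rcases R.update_cases j with ⟨-, h, -⟩ | ⟨-, -, h, -⟩ | ⟨-, -, h, -⟩ <;> rw [h]
    exacts [R.iterate_mem j, ih, ih]

lemma exists_null_of_counter_ne_zero {j : ℕ} (hj : R.counter j ≠ 0) :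
    ∃ i, j = i + 1 ∧ T < R.gap i ∧ R.counter i + 1 < K ∧ R.counter j = R.counter i + 1 := by
  obtain _ | i := j
  · exact absurd R.counter_zero hj
  rcases R.update_cases i with ⟨-, -, -, h⟩ | ⟨hT, hK, -, -, h⟩ | ⟨-, -, -, -, h⟩
  exacts [absurd h hj, ⟨i, rfl, hT, hK, h⟩, absurd h hj]

lemma exists_cycle_start (j : ℕ) :
    ∃ j₀, j₀ + R.counter j = j ∧ ∀ i ≤ R.counter j, R.counter (j₀ + i) = i ∧
      R.center (j₀ + i) = R.center j ∧ R.stepsize (j₀ + i) = R.stepsize j ∧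
      (i < R.counter j → T < R.gap (j₀ + i)) := by
  induction hm : R.counter j generalizing j with
  | zero =>
    refine ⟨j, rfl, fun i hi ↦ ?_⟩
    obtain rfl := Nat.le_zero.1 hi
    exact ⟨hm, rfl, rfl, fun h ↦ absurd h (lt_irrefl 0)⟩
  | succ m ih =>
    obtain ⟨k, rfl, hT, hK, hcount⟩ := R.exists_null_of_counter_ne_zero (j := j) (by lia)
    obtain ⟨j₀, rfl, hcycle⟩ := ih k (by lia)
    obtain ⟨hc, hlam, -⟩ := R.null _ hT hK
    refine ⟨j₀, rfl, fun i hi ↦ ?_⟩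
    rcases Nat.le_succ_iff.1 hi with hi | rfl
    · obtain ⟨hN, hc', hlam', hgap⟩ := hcycle i hi
      refine ⟨hN, hc'.trans hc.symm, hlam'.trans hlam.symm, fun _ ↦ ?_⟩
      rcases hi.lt_or_eq with hi | rfl
      exacts [hgap hi, hT]
    · exact ⟨hm, rfl, rfl, fun h ↦ absurd h (lt_irrefl _)⟩

lemma value_le (j : ℕ) : R.value j ≤
    f (R.iterate j) + h (R.iterate j)
      + χ / (2 * R.stepsize j) * ‖R.iterate j - R.center j‖ ^ 2 := by
  by_cases hj : R.counter j = 0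
  · exact (R.value_of_counter_eq_zero j hj).le
  · exact (R.value_of_counter_ne_zero j hj).trans_le (min_le_right _ _)

lemma exists_value_eq (j : ℕ) :
    ∃ i ≤ j, R.value j = f (R.iterate i) + h (R.iterate i)
      + χ / (2 * R.stepsize j) * ‖R.iterate i - R.center j‖ ^ 2 := by
  induction hm : R.counter j generalizing j with
  | zero => exact ⟨j, le_rfl, R.value_of_counter_eq_zero j hm⟩
  | succ m ih =>
    have hj : R.counter j ≠ 0 := by lia
    have hvalue := R.value_of_counter_ne_zero j hj
    obtain ⟨k, rfl, hT, hK, hcount⟩ := R.exists_null_of_counter_ne_zero hj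
    obtain ⟨hc, hlam, -⟩ := R.null k hT hK
    rw [Nat.add_sub_cancel] at hvalue
    rcases min_choice (R.value k) _ with hmin | hmin <;> rw [hmin] at hvalue
    · obtain ⟨i, hi, hki⟩ := ih k (by lia)
      exact ⟨i, by lia, by rw [hvalue, hki, hc, hlam]⟩
    · exact ⟨k + 1, le_rfl, hvalue⟩

lemma gap_le_linErr {j : ℕ} {p : E}
    (hp : f p + ⟪g p, R.iterate j - p⟫ ≤ R.model j (R.iterate j)) :
    R.gap j ≤ linErr f g p (R.iterate j)
      - (1 - χ) / (2 * R.stepsize j) * ‖R.iterate j - R.center j‖ ^ 2 := by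
  have hvalue := R.value_le j
  have hgap := R.gap_eq j
  simp only [proxObj, Pi.add_apply, linErr] at hgap ⊢
  rw [sub_div, sub_mul, one_div_mul_eq_div]
  linarith

lemma gap_succ_le_linErr {j : ℕ} (hT : T < R.gap j) (hK : R.counter j + 1 < K) :
    R.gap (j + 1) ≤ linErr f g (R.iterate j) (R.iterate (j + 1))
      - (1 - χ) / (2 * R.stepsize j) * ‖R.iterate (j + 1) - R.center j‖ ^ 2 := by
  obtain ⟨hc, hlam, -, fbar, -, -, -, -, hlin⟩ := R.null j hT hK
  simpa only [hc, hlam] using R.gap_le_linErr (hlin _ (R.iterate_mem (j + 1)))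

lemma gap_succ_le (hh : ConvexOn ℝ S h) {j : ℕ} (hT : T < R.gap j) (hK : R.counter j + 1 < K) :
    R.gap (j + 1)
      ≤ R.gap j - ‖R.iterate (j + 1) - R.iterate j‖ ^ 2 / (2 * R.stepsize j) := by
  obtain ⟨hc, hlam, hN, fbar, hconv, heq, hmin, hle, -⟩ := R.null j hT hK
  have hvalue : R.value (j + 1) ≤ R.value j :=
    (R.value_of_counter_ne_zero (j + 1) (by lia)).trans_le (min_le_left _ _)
  have hprox := proxObj_add_sq_norm_le (strongConvexOn_zero.2 (hconv.add hh)) (R.iterate_mem j)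
    hmin (R.iterate_mem (j + 1))
  have hmodel := hle _ (R.iterate_mem (j + 1))
  have hcoeff : (0 + 1 / R.stepsize j) / 2 * ‖R.iterate (j + 1) - R.iterate j‖ ^ 2
      = ‖R.iterate (j + 1) - R.iterate j‖ ^ 2 / (2 * R.stepsize j) := by ring
  rw [R.gap_eq, R.gap_eq, hc, hlam]
  simp only [hcoeff, proxObj, Pi.add_apply, heq] at hprox ⊢
  linarith

lemma exists_gapRecursion (hh : ConvexOn ℝ S h) (j : ℕ) :
    ∃ (y : ℕ → E) (t : ℕ → ℝ),
      GapRecursion f g (1 - χ) (R.stepsize j) (R.counter j) y t ∧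
      (∀ i, y i ∈ S) ∧ t (R.counter j) = R.gap j := by
  obtain ⟨j₀, hj₀, hcycle⟩ := R.exists_cycle_start j
  refine ⟨fun i ↦ i.casesOn (R.center j) fun i ↦ R.iterate (j₀ + i), fun i ↦ R.gap (j₀ + i),
    ⟨fun i hi ↦ ?_, fun i hi ↦ ?_⟩, fun i ↦ ?_, congrArg R.gap hj₀⟩
  · obtain _ | i := i
    · obtain ⟨hN, hc, hlam, -⟩ := hcycle 0 hi
      have := R.gap_le_linErr (R.linearization_le_model (j₀ + 0) hN _ (R.iterate_mem (j₀ + 0)))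
      rwa [hc, hlam] at this
    · obtain ⟨hN, hc, hlam, hT⟩ := hcycle i (by lia)
      have := R.gap_succ_le_linErr (hT hi) (by rw [hN]; exact hi.trans_lt (R.counter_lt j))
      rwa [hc, hlam] at this
  · obtain ⟨hN, -, hlam, hT⟩ := hcycle i hi.le
    have := R.gap_succ_le hh (hT hi)
      (by rw [hN]; exact (Nat.succ_le_of_lt hi).trans_lt (R.counter_lt j))
    rwa [hlam] at this
  · obtain _ | i := i
    exacts [R.center_mem j, R.iterate_mem _]

lemma lt_stepsize_half_of_reset {M L D lmin : ℝ} (hg : IsHybridOracle S f g M L)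
    (hh : ConvexOn ℝ S h) (hD : ∀ a ∈ S, ∀ b ∈ S, ‖a - b‖ ≤ D) (hM : 0 < M) (hL : 0 ≤ L)
    (hχ0 : 0 ≤ χ) (hχ1 : χ < 1) (hT : 0 < T)
    (hlmin : 2 * lmin * (logFactor M L D K * (M ^ 2 / T + 2 * (L / (1 - χ)))) ≤ (1 - χ) * K)
    {j : ℕ} (hgap : T < R.gap j) (hK : R.counter j + 1 = K) : lmin < R.stepsize j / 2 := by
  by_contra! hle
  obtain ⟨y, t, hrec, hy, hlast⟩ := R.exists_gapRecursion hh j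
  have hω : 0 < 1 - χ := sub_pos.2 hχ1
  have hK' : (R.counter j : ℝ) + 1 = K := by exact_mod_cast hK
  have hB : 8 ≤ logFactor M L D K := eight_le_logFactor M L D K.cast_nonneg
  refine (hrec.gap_le hg hh.1 (fun i _ ↦ hy i) hD hM hL hω (sub_le_self 1 hχ0) (R.stepsize_pos j)
    hT ?_).not_gt (hlast ▸ hgap)
  rw [hK']
  calc logFactor M L D K * (R.stepsize j * M ^ 2 / T + 2 * (R.stepsize j * L / (1 - χ)))
      = R.stepsize j * (logFactor M L D K * (M ^ 2 / T + 2 * (L / (1 - χ)))) := by ring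
    _ ≤ 2 * lmin * (logFactor M L D K * (M ^ 2 / T + 2 * (L / (1 - χ)))) := by gcongr; linarith
    _ ≤ (1 - χ) * K := hlmin

lemma le_stepsize {M L D lmin : ℝ} (hg : IsHybridOracle S f g M L)
    (hh : ConvexOn ℝ S h) (hD : ∀ a ∈ S, ∀ b ∈ S, ‖a - b‖ ≤ D) (hM : 0 < M) (hL : 0 ≤ L)
    (hχ0 : 0 ≤ χ) (hχ1 : χ < 1) (hT : 0 < T) (hlmin0 : lmin ≤ R.stepsize 0)
    (hlmin : 2 * lmin * (logFactor M L D K * (M ^ 2 / T + 2 * (L / (1 - χ)))) ≤ (1 - χ) * K)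
    (j : ℕ) : lmin ≤ R.stepsize j := by
  induction j with
  | zero => exact hlmin0
  | succ j ih =>
    rcases R.update_cases j with ⟨-, -, h, -⟩ | ⟨-, -, -, h, -⟩ | ⟨hgap, hK, -, h, -⟩ <;> rw [h]
    exacts [ih, ih,
      (R.lt_stepsize_half_of_reset hg hh hD hM hL hχ0 hχ1 hT hlmin hgap hK).le]

end Run
end Execution

section SeriousSteps

lemma sq_add_div_contraction {χ lam m ε p q d d' : ℝ} (hχ0 : 0 ≤ χ) (hχ1 : χ < 1) (hlam : 0 < lam)
    (hm : 0 < m) (hε : 0 ≤ ε) (hd' : 0 ≤ d') (hpq : d' ≤ p + q)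
    (hdescent : lam * ε + d' ^ 2 + χ / (1 - χ) * p ^ 2 + χ * (lam * m) * q ^ 2 ≤ d ^ 2) :
    (1 + lam * m) * (d' ^ 2 + ε / m) ≤ (1 + (1 - χ) * (lam * m)) * (d ^ 2 + ε / m) := by
  have hω : 0 < 1 - χ := sub_pos.2 hχ1
  set a := lam * m
  have : 0 < a := mul_pos hlam hm
  have hεa : a * (ε / m) = lam * ε := by simp only [a]; field_simp
  have hsq : χ * a * d' ^ 2 ≤ χ * a * (p + q) ^ 2 := by gcongr
  have hcauchy : χ * a * (p + q) ^ 2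
      ≤ (1 + (1 - χ) * a) * (χ / (1 - χ) * p ^ 2 + χ * a * q ^ 2) := by
    have : 0 ≤ χ / (1 - χ) * (p - (1 - χ) * a * q) ^ 2 := by positivity
    refine le_of_sub_nonneg (this.trans_eq ?_)
    field_simp
    ring
  have hscaled := mul_le_mul_of_nonneg_left hdescent (by positivity : 0 ≤ 1 + (1 - χ) * a)
  have hslack : 0 ≤ (1 - χ) * (lam * ε) * (1 + a) := by positivity
  linear_combination hsq + hcauchy + hscaled + hslack + χ * hεa

lemma log_add_le_log_of_contraction {χ a b v v' : ℝ} (hχ : 0 ≤ χ) (hb : 0 < b) (hba : b ≤ a)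
    (hv : 0 < v) (hv' : 0 < v') (h : (1 + a) * v' ≤ (1 + (1 - χ) * a) * v) :
    Real.log v' + χ * (b / (1 + b)) ≤ Real.log v := by
  have ha : 0 < a := hb.trans_le hba
  have hratio : v' / v ≤ 1 - χ * (a / (1 + a)) := by
    rw [div_le_iff₀ hv, ← mul_le_mul_iff_right₀ (by positivity : 0 < 1 + a)]
    refine h.trans_eq ?_
    field_simp
    ring
  have hmono : χ * (b / (1 + b)) ≤ χ * (a / (1 + a)) := by
    refine mul_le_mul_of_nonneg_left ?_ hχ
    rw [div_le_div_iff₀ (by positivity) (by positivity)]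
    linarith
  have hlog := Real.log_le_sub_one_of_pos (div_pos hv' hv)
  rw [Real.log_div hv'.ne' hv.ne'] at hlog
  linarith

namespace Run

variable {S : Set E} {f h : E → ℝ} {g : E → E} {χ T ε : ℝ} {K : ℕ} (R : Run S f h g χ T K) {z : E}

lemma value_sub_gap_add_le {ν : ℝ} (hh : StrongConvexOn S ν h) (j : ℕ) {u : E} (hu : u ∈ S) :
    R.value j - R.gap j + (ν + 1 / R.stepsize j) / 2 * ‖u - R.iterate j‖ ^ 2
      ≤ f u + h u + ‖u - R.center j‖ ^ 2 / (2 * R.stepsize j) := by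
  have hconv : StrongConvexOn S ν (R.model j + h) := by
    refine ((strongConvexOn_zero.2 (R.model_convexOn j)).add hh).mono fun r ↦ Eq.le ?_
    simp only [Pi.add_apply]
    ring
  have hprox := proxObj_add_sq_norm_le hconv (R.iterate_mem j) (R.isMinOn_iterate j) hu
  have hmodel := R.model_le j u hu
  have hgap := R.gap_eq j
  have hobj : proxObj (R.model j + h) (R.center j) (R.stepsize j) u
      = R.model j u + h u + ‖u - R.center j‖ ^ 2 / (2 * R.stepsize j) := rfl
  linarith

lemma sq_norm_serious_le {ν : ℝ} (hh : StrongConvexOn S ν h) (hχ0 : 0 ≤ χ) {j : ℕ} (hz : z ∈ S)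
    (hfar : ∀ i ≤ j, f z + h z + ε ≤ f (R.iterate i) + h (R.iterate i)) (hgap : R.gap j ≤ ε / 2) :
    R.stepsize j * ε + (1 + R.stepsize j * ν) * ‖R.iterate j - z‖ ^ 2 ≤ ‖R.center j - z‖ ^ 2 := by
  obtain ⟨i, hi, hvalue⟩ := R.exists_value_eq j
  have hlam := R.stepsize_pos j
  have hmin := R.value_sub_gap_add_le hh j hz
  have hpen : 0 ≤ χ / (2 * R.stepsize j) * ‖R.iterate i - R.center j‖ ^ 2 := by positivity
  rw [norm_sub_rev z, norm_sub_rev z] at hmin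
  have hhalf : ε / 2 + (ν + 1 / R.stepsize j) / 2 * ‖R.iterate j - z‖ ^ 2
      ≤ ‖R.center j - z‖ ^ 2 / (2 * R.stepsize j) := by linarith [hfar i hi]
  rw [le_div_iff₀ (by positivity)] at hhalf
  refine Eq.trans_le ?_ hhalf
  field_simp
  ring

lemma exists_serious_descent {μ : ℝ} (hh : ConvexOn ℝ S h) (hφ : StrongConvexOn S μ (f + h))
    (hχ0 : 0 ≤ χ) (hχ1 : χ < 1) {j : ℕ} (hz : z ∈ S)
    (hfar : ∀ i ≤ j, f z + h z + ε ≤ f (R.iterate i) + h (R.iterate i))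
    (hgap : R.gap j ≤ (1 - χ) * ε / 2) :
    ∃ y, R.stepsize j * ε + ‖R.iterate j - z‖ ^ 2 + χ / (1 - χ) * ‖R.iterate j - y‖ ^ 2
      + χ * (R.stepsize j * μ) * ‖y - z‖ ^ 2 ≤ ‖R.center j - z‖ ^ 2 := by
  obtain ⟨i, hi, hvalue⟩ := R.exists_value_eq j
  have hlam := R.stepsize_pos j
  have hω : 0 < 1 - χ := sub_pos.2 hχ1
  set y := R.iterate i
  have hy : y ∈ S := R.iterate_mem i
  have hmin := R.value_sub_gap_add_le (strongConvexOn_zero.2 hh) j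
    (hh.1 hz hy hω.le hχ0 (sub_add_cancel 1 χ))
  have hchord := hφ.2 hz hy hω.le hχ0 (sub_add_cancel 1 χ)
  rw [norm_sq_combo_sub (sub_add_cancel 1 χ), norm_sq_combo_sub (sub_add_cancel 1 χ)] at hmin
  simp only [Pi.add_apply, smul_eq_mul] at hchord
  have hfar_i := mul_le_mul_of_nonneg_left (hfar i hi) hω.le
  refine ⟨y, ?_⟩
  rw [norm_sub_rev _ z, norm_sub_rev _ y, norm_sub_rev y z, norm_sub_rev _ z]
  have hsum : (1 - χ) * ε / 2 + ((1 - χ) * ‖z - R.iterate j‖ ^ 2 + χ * ‖y - R.iterate j‖ ^ 2)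
      / (2 * R.stepsize j) + (1 - χ) * χ * (μ / 2 * ‖z - y‖ ^ 2)
      ≤ (1 - χ) * ‖z - R.center j‖ ^ 2 / (2 * R.stepsize j) := by
    linear_combination hmin + hchord + hfar_i + hgap - hvalue
  have hscaled := mul_le_mul_of_nonneg_left hsum
    (by positivity : 0 ≤ 2 * R.stepsize j / (1 - χ))
  refine Eq.trans_le ?_ (hscaled.trans_eq ?_)
  · field_simp
    ring
  · field_simp

lemma log_serious_add_le_of_strongConvexOn_add {μ lmin : ℝ} (hh : ConvexOn ℝ S h)
    (hφ : StrongConvexOn S μ (f + h)) (hμ : 0 < μ) (hε : 0 < ε) (hχ0 : 0 ≤ χ) (hχ1 : χ < 1)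
    (hlmin : 0 < lmin) {j : ℕ} (hlow : lmin ≤ R.stepsize j) (hz : z ∈ S)
    (hfar : ∀ i ≤ j, f z + h z + ε ≤ f (R.iterate i) + h (R.iterate i))
    (hgap : R.gap j ≤ (1 - χ) * ε / 2) :
    Real.log (‖R.iterate j - z‖ ^ 2 + ε / μ) + χ * (lmin * μ / (1 + lmin * μ))
      ≤ Real.log (‖R.center j - z‖ ^ 2 + ε / μ) := by
  obtain ⟨y, hy⟩ := R.exists_serious_descent hh hφ hχ0 hχ1 hz hfar hgap
  exact log_add_le_log_of_contraction hχ0 (mul_pos hlmin hμ) (by gcongr) (by positivity)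
    (by positivity) (sq_add_div_contraction hχ0 hχ1 (R.stepsize_pos j) hμ hε.le (norm_nonneg _)
      (norm_sub_le_norm_sub_add_norm_sub _ y _) hy)

lemma log_serious_add_le_of_strongConvexOn {ν lmin : ℝ} (hh : StrongConvexOn S ν h) (hν : 0 < ν)
    (hε : 0 < ε) (hχ0 : 0 ≤ χ) (hlmin : 0 < lmin) {j : ℕ} (hlow : lmin ≤ R.stepsize j)
    (hz : z ∈ S) (hfar : ∀ i ≤ j, f z + h z + ε ≤ f (R.iterate i) + h (R.iterate i))
    (hgap : R.gap j ≤ ε / 2) :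
    Real.log (‖R.iterate j - z‖ ^ 2 + ε / ν) + lmin * ν / (1 + lmin * ν)
      ≤ Real.log (‖R.center j - z‖ ^ 2 + ε / ν) := by
  have hdescent := R.sq_norm_serious_le hh hχ0 hz hfar hgap
  have hε_eq : R.stepsize j * ν * (ε / ν) = R.stepsize j * ε := by field_simp
  rw [← one_mul (lmin * ν / (1 + lmin * ν))]
  refine log_add_le_log_of_contraction (a := R.stepsize j * ν) zero_le_one (mul_pos hlmin hν)
    (by gcongr) (by positivity) (by positivity) ?_
  linear_combination hdescent + hε_eq

end Run
end SeriousSteps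

section Counting

lemma add_one_le_ceil_two_mul_log {X : ℝ} (hX : 1 < X) {r : ℕ} (hr : (2 : ℝ) ^ r ≤ X) :
    (r : ℝ) + 1 ≤ ⌈2 * Real.log X⌉ := by
  suffices hlt : (r : ℝ) < 2 * Real.log X by
    exact_mod_cast Int.add_one_le_iff.2 (Int.lt_ceil.2 (by exact_mod_cast hlt) : (r : ℤ) < _)
  rcases r.eq_zero_or_pos with rfl | hr0
  · simpa using Real.log_pos hX
  calc (r : ℝ) = r * 1 := (mul_one _).symm
    _ < r * (2 * Real.log 2) := by gcongr; linarith [Real.log_two_gt_d9]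
    _ = 2 * Real.log (2 ^ r) := by rw [Real.log_pow]; ring
    _ ≤ 2 * Real.log X := by gcongr

lemma exists_add_one_le_of_forall_lt_not {P : ℕ → Prop} {A : ℝ}
    (hA : ∀ J : ℕ, (∀ i < J, ¬ P i) → (J + 1 : ℝ) ≤ A) : ∃ j : ℕ, (j + 1 : ℝ) ≤ A ∧ P j := by
  classical
  have hP : ∃ j, P j := by
    by_contra! hnone
    linarith [hA ⌈A⌉₊ fun i _ ↦ hnone i, Nat.le_ceil A]
  exact ⟨Nat.find hP, hA _ fun i ↦ Nat.find_min hP, Nat.find_spec hP⟩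

lemma le_comp_infDist {α : Type*} [PseudoMetricSpace α] {X : Set α} (hX : X.Nonempty) {a : α}
    {A : ℝ} {G : ℝ → ℝ} (hG : Continuous G) (hA : ∀ z ∈ X, A ≤ G (dist a z)) :
    A ≤ G (Metric.infDist a X) :=
  closure_minimal (t := G ⁻¹' Set.Ici A) (Set.image_subset_iff.2 hA) (isClosed_Ici.preimage hG)
    ((Metric.isGLB_infDist hX).mem_closure (hX.image _))

namespace Run

variable {S : Set E} {f h : E → ℝ} {g : E → E} {χ T : ℝ} {K : ℕ} (R : Run S f h g χ T K)

/-- The number of serious updates among the first `j` updates. -/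
noncomputable def seriousCount (j : ℕ) : ℕ := Nat.count (fun i ↦ R.gap i ≤ T) j

open Classical in
/-- The number of reset updates among the first `j` updates. -/
noncomputable def resetCount (j : ℕ) : ℕ := Nat.count (fun i ↦ T < R.gap i ∧ R.counter i + 1 = K) j

lemma le_mul_count_add_counter (j : ℕ) :
    j ≤ K * (R.seriousCount j + R.resetCount j) + R.counter j := by
  induction j with
  | zero => exact Nat.zero_le _
  | succ j ih =>
    have hK := R.counter_lt j
    simp only [seriousCount, resetCount, Nat.count_succ, mul_add] at ih ⊢
    rcases R.update_cases j with ⟨hT, -, -, hN⟩ | ⟨hT, hK', -, -, hN⟩ | ⟨hT, hK', -, -, hN⟩ <;>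
      rw [hN]
    · simp only [hT, hT.not_gt, false_and, if_true, if_false]
      lia
    · simp only [hT.not_ge, hK'.ne, and_false, if_false]
      lia
    · simp only [hT, hT.not_ge, hK', and_self, if_true, if_false]
      lia

lemma stepsize_mul_two_pow_resetCount (j : ℕ) :
    R.stepsize j * 2 ^ R.resetCount j = R.stepsize 0 := by
  induction j with
  | zero => simp [resetCount]
  | succ j ih =>
    simp only [resetCount, Nat.count_succ] at ih ⊢
    rw [← ih]
    rcases R.update_cases j with ⟨hT, -, hlam, -⟩ | ⟨-, hK, -, hlam, -⟩ | ⟨hT, hK, -, hlam, -⟩ <;>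
      rw [hlam]
    · simp only [hT.not_gt, false_and, if_false, add_zero]
    · simp only [hK.ne, and_false, if_false, add_zero]
    · simp only [hT, hK, and_self, if_true, pow_succ]
      ring

lemma add_one_le_seriousCount_mul_add {lmin : ℝ} (hlmin : 0 < lmin) (hlmin0 : lmin < R.stepsize 0)
    {j : ℕ} (hlow : lmin ≤ R.stepsize j) :
    (j + 1 : ℝ) ≤ K * R.seriousCount j + K * ⌈2 * Real.log (R.stepsize 0 / lmin)⌉ := by
  have hpow : (2 : ℝ) ^ R.resetCount j ≤ R.stepsize 0 / lmin := by
    rw [le_div_iff₀ hlmin, ← R.stepsize_mul_two_pow_resetCount j, mul_comm]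
    gcongr
  have hceil := add_one_le_ceil_two_mul_log ((one_lt_div hlmin).2 hlmin0) hpow
  have hj : (j + 1 : ℝ) ≤ K * R.seriousCount j + K * (R.resetCount j + 1) := by
    have hlt := R.counter_lt j
    have hle := R.le_mul_count_add_counter j
    have : j + 1 ≤ K * R.seriousCount j + K * (R.resetCount j + 1) := by linarith
    exact_mod_cast this
  exact hj.trans (by gcongr)

lemma add_seriousCount_mul_le {W : E → ℝ} {δ : ℝ} {j : ℕ}
    (hW : ∀ i < j, R.gap i ≤ T → W (R.iterate i) + δ ≤ W (R.center i)) :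
    W (R.center j) + R.seriousCount j * δ ≤ W (R.center 0) := by
  induction j with
  | zero => simp [seriousCount]
  | succ j ih =>
    have ih := ih fun i hi ↦ hW i (hi.trans j.lt_succ_self)
    simp only [seriousCount, Nat.count_succ] at ih ⊢
    rcases R.update_cases j with ⟨hT, hc, -⟩ | ⟨hT, -, hc, -⟩ | ⟨hT, -, hc, -⟩ <;> rw [hc]
    · simp only [hT, if_true, Nat.cast_add, Nat.cast_one]
      linarith [hW j j.lt_succ_self hT]
    · simpa only [hT.not_ge, if_false, add_zero] using ih
    · simpa only [hT.not_ge, if_false, add_zero] using ih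

variable {ε lmin φstar : ℝ} {X : Set E}

theorem exists_le_of_potential (hX : X.Nonempty) (hlmin : 0 < lmin) (hlmin0 : lmin < R.stepsize 0)
    (hlow : ∀ j, lmin ≤ R.stepsize j) {W : E → E → ℝ} {δ : ℝ} (hδ : 0 < δ) {ψ : ℝ → ℝ}
    (hψ : Continuous ψ) (hW : ∀ z ∈ X, ∀ j, R.gap j ≤ T →
      (∀ i ≤ j, φstar + ε ≤ f (R.iterate i) + h (R.iterate i)) →
      W z (R.iterate j) + δ ≤ W z (R.center j))
    (hWψ : ∀ z ∈ X, ∀ c, W z (R.center 0) - W z c ≤ ψ ‖R.center 0 - z‖) :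
    ∃ j : ℕ, (j + 1 : ℝ) ≤ K / δ * ψ (Metric.infDist (R.center 0) X)
        + K * ⌈2 * Real.log (R.stepsize 0 / lmin)⌉ ∧
      f (R.iterate j) + h (R.iterate j) - φstar ≤ ε := by
  refine exists_add_one_le_of_forall_lt_not fun J hJ ↦
    (R.add_one_le_seriousCount_mul_add hlmin hlmin0 (hlow J)).trans (add_le_add_left ?_ _)
  refine le_comp_infDist hX (G := fun d ↦ K / δ * ψ d) (by fun_prop) fun z hz ↦ ?_
  have hdrop := R.add_seriousCount_mul_le (W := W z) (j := J) fun i hi hT ↦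
    hW z hz i hT fun l hl ↦ by linarith [not_le.1 (hJ l (hl.trans_lt hi))]
  have hbound := hWψ z hz (R.center J)
  rw [dist_eq_norm, div_mul_eq_mul_div, mul_div_assoc]
  gcongr
  rw [le_div_iff₀ hδ]
  linarith

theorem exists_le_of_convexOn (hh : ConvexOn ℝ S h) (hχ0 : 0 ≤ χ) (hε : 0 < ε) (hT : T ≤ ε / 2)
    (hX : X.Nonempty) (hXS : X ⊆ S) (hXφ : ∀ z ∈ X, f z + h z ≤ φstar)
    (hlmin : 0 < lmin) (hlmin0 : lmin < R.stepsize 0) (hlow : ∀ j, lmin ≤ R.stepsize j) :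
    ∃ j : ℕ, (j + 1 : ℝ) ≤ K / (lmin * ε) * Metric.infDist (R.center 0) X ^ 2
        + K * ⌈2 * Real.log (R.stepsize 0 / lmin)⌉ ∧
      f (R.iterate j) + h (R.iterate j) - φstar ≤ ε := by
  refine R.exists_le_of_potential hX hlmin hlmin0 hlow (W := fun z c ↦ ‖c - z‖ ^ 2)
    (ψ := fun d ↦ d ^ 2) (by positivity) (by fun_prop) (fun z hz j hgap hfar ↦ ?_)
    fun z _ c ↦ sub_le_self _ (sq_nonneg _)
  have hdescent := R.sq_norm_serious_le (strongConvexOn_zero.2 hh) hχ0 (hXS hz)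
    (fun i hi ↦ by linarith [hfar i hi, hXφ z hz]) (hgap.trans hT)
  have hstep := mul_le_mul_of_nonneg_right (hlow j) hε.le
  linarith

theorem exists_le_of_log_potential {m δ : ℝ} (hm : 0 < m) (hε : 0 < ε) (hX : X.Nonempty)
    (hlmin : 0 < lmin) (hlmin0 : lmin < R.stepsize 0) (hlow : ∀ j, lmin ≤ R.stepsize j)
    (hδ : 0 < δ) (hW : ∀ z ∈ X, ∀ j, R.gap j ≤ T →
      (∀ i ≤ j, φstar + ε ≤ f (R.iterate i) + h (R.iterate i)) →
      Real.log (‖R.iterate j - z‖ ^ 2 + ε / m) + δ ≤ Real.log (‖R.center j - z‖ ^ 2 + ε / m)) :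
    ∃ j : ℕ, (j + 1 : ℝ) ≤ K / δ * Real.log (1 + m * Metric.infDist (R.center 0) X ^ 2 / ε)
        + K * ⌈2 * Real.log (R.stepsize 0 / lmin)⌉ ∧
      f (R.iterate j) + h (R.iterate j) - φstar ≤ ε := by
  have hpos (d : ℝ) : 0 < 1 + m * d ^ 2 / ε := by positivity
  refine R.exists_le_of_potential hX hlmin hlmin0 hlow
    (W := fun z c ↦ Real.log (‖c - z‖ ^ 2 + ε / m)) (ψ := fun d ↦ Real.log (1 + m * d ^ 2 / ε)) hδ
    (Continuous.log (by fun_prop) fun d ↦ (hpos d).ne') hW fun z _ c ↦ ?_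
  have hmono : Real.log (ε / m) ≤ Real.log (‖c - z‖ ^ 2 + ε / m) :=
    Real.log_le_log (by positivity) (le_add_of_nonneg_left (sq_nonneg _))
  have hscale : ‖R.center 0 - z‖ ^ 2 + ε / m
      = ε / m * (1 + m * ‖R.center 0 - z‖ ^ 2 / ε) := by
    field_simp
    ring
  rw [hscale, Real.log_mul (by positivity) (hpos _).ne']
  linarith

theorem exists_le_of_strongConvexOn_add {μ : ℝ} (hh : ConvexOn ℝ S h)
    (hφ : StrongConvexOn S μ (f + h)) (hμ : 0 < μ) (hχ0 : 0 < χ) (hχ1 : χ < 1) (hε : 0 < ε)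
    (hT : T ≤ (1 - χ) * ε / 2) (hX : X.Nonempty) (hXS : X ⊆ S)
    (hXφ : ∀ z ∈ X, f z + h z ≤ φstar) (hlmin : 0 < lmin) (hlmin0 : lmin < R.stepsize 0)
    (hlow : ∀ j, lmin ≤ R.stepsize j) :
    ∃ j : ℕ, (j + 1 : ℝ) ≤ K / (χ * (lmin * μ / (1 + lmin * μ)))
        * Real.log (1 + μ * Metric.infDist (R.center 0) X ^ 2 / ε)
        + K * ⌈2 * Real.log (R.stepsize 0 / lmin)⌉ ∧
      f (R.iterate j) + h (R.iterate j) - φstar ≤ ε :=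
  R.exists_le_of_log_potential hμ hε hX hlmin hlmin0 hlow (by positivity) fun z hz j hgap hfar ↦
    R.log_serious_add_le_of_strongConvexOn_add hh hφ hμ hε hχ0.le hχ1 hlmin (hlow j) (hXS hz)
      (fun i hi ↦ by linarith [hfar i hi, hXφ z hz]) (hgap.trans hT)

theorem exists_le_of_strongConvexOn {ν : ℝ} (hh : StrongConvexOn S ν h) (hν : 0 < ν)
    (hχ0 : 0 ≤ χ) (hε : 0 < ε) (hT : T ≤ ε / 2) (hX : X.Nonempty) (hXS : X ⊆ S)
    (hXφ : ∀ z ∈ X, f z + h z ≤ φstar) (hlmin : 0 < lmin) (hlmin0 : lmin < R.stepsize 0)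
    (hlow : ∀ j, lmin ≤ R.stepsize j) :
    ∃ j : ℕ, (j + 1 : ℝ) ≤ K / (lmin * ν / (1 + lmin * ν))
        * Real.log (1 + ν * Metric.infDist (R.center 0) X ^ 2 / ε)
        + K * ⌈2 * Real.log (R.stepsize 0 / lmin)⌉ ∧
      f (R.iterate j) + h (R.iterate j) - φstar ≤ ε :=
  R.exists_le_of_log_potential hν hε hX hlmin hlmin0 hlow (by positivity) fun z hz j hgap hfar ↦
    R.log_serious_add_le_of_strongConvexOn hh hν hε hχ0 hlmin (hlow j) (hXS hz)
      (fun i hi ↦ by linarith [hfar i hi, hXφ z hz]) (hgap.trans hT)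

end Run
end Counting

section Complexity

/-- The quantity `U(ε)` in the complexity bounds: no stepsize of U-PB started with `lam₀` falls
below `N * ε / U(ε)`, where `N` is the cycle length. -/
noncomputable def workFactor (χ M L D lam₀ N ε : ℝ) : ℝ :=
  4 * (M ^ 2 + ε * L) * logFactor M L D N / (1 - χ) ^ 2 + N * ε / lam₀

variable {χ M L lam₀ N ε : ℝ}

lemma div_lt_workFactor (D : ℝ) (hχ : χ < 1) (hM : 0 < M) (hL : 0 ≤ L) (hN : 0 ≤ N) (hε : 0 ≤ ε) :
    N * ε / lam₀ < workFactor χ M L D lam₀ N ε := by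
  have : 0 < 1 - χ := sub_pos.2 hχ
  have hB : 0 < logFactor M L D N := by linarith [eight_le_logFactor M L D hN]
  exact lt_add_of_pos_left _ (by positivity)

lemma workFactor_pos (D : ℝ) (hχ : χ < 1) (hM : 0 < M) (hL : 0 ≤ L) (hlam₀ : 0 < lam₀)
    (hN : 0 ≤ N) (hε : 0 ≤ ε) : 0 < workFactor χ M L D lam₀ N ε :=
  (by positivity : 0 ≤ N * ε / lam₀).trans_lt (div_lt_workFactor D hχ hM hL hN hε)

lemma div_workFactor_lt (D : ℝ) (hχ : χ < 1) (hM : 0 < M) (hL : 0 ≤ L) (hlam₀ : 0 < lam₀)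
    (hN : 0 ≤ N) (hε : 0 ≤ ε) : N * ε / workFactor χ M L D lam₀ N ε < lam₀ :=
  (div_lt_comm₀ (workFactor_pos D hχ hM hL hlam₀ hN hε) hlam₀).2
    (div_lt_workFactor D hχ hM hL hN hε)

lemma div_workFactor_budget (D : ℝ) (hχ : χ < 1) (hlam₀ : 0 < lam₀) (hN : 0 ≤ N) (hε : 0 < ε)
    (hU : 0 < workFactor χ M L D lam₀ N ε) :
    2 * (N * ε / workFactor χ M L D lam₀ N ε) *
      (logFactor M L D N * (M ^ 2 / ((1 - χ) * ε / 2) + 2 * (L / (1 - χ)))) ≤ (1 - χ) * N := by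
  have hω : 0 < 1 - χ := sub_pos.2 hχ
  set U := workFactor χ M L D lam₀ N ε
  have hle : 4 * (M ^ 2 + ε * L) * logFactor M L D N / (1 - χ) ^ 2 ≤ U :=
    le_add_of_nonneg_right (by positivity)
  calc 2 * (N * ε / U) *
        (logFactor M L D N * (M ^ 2 / ((1 - χ) * ε / 2) + 2 * (L / (1 - χ))))
      = (1 - χ) * N * (4 * (M ^ 2 + ε * L) * logFactor M L D N / (1 - χ) ^ 2) / U := by
        field_simp
        ring
    _ ≤ (1 - χ) * N * U / U := by gcongr
    _ = (1 - χ) * N := mul_div_cancel_right₀ _ hU.ne'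

lemma Run.div_workFactor_le_stepsize {S : Set E} {f h : E → ℝ} {g : E → E} {D : ℝ} {K : ℕ}
    (R : Run S f h g χ ((1 - χ) * ε / 2) K) (hg : IsHybridOracle S f g M L) (hh : ConvexOn ℝ S h)
    (hD : ∀ a ∈ S, ∀ b ∈ S, ‖a - b‖ ≤ D) (hM : 0 < M) (hL : 0 ≤ L) (hχ0 : 0 ≤ χ) (hχ1 : χ < 1)
    (hε : 0 < ε) (j : ℕ) :
    K * ε / workFactor χ M L D (R.stepsize 0) K ε ≤ R.stepsize j := by
  have hlam := R.stepsize_zero_pos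
  have : 0 < 1 - χ := sub_pos.2 hχ1
  have hK : (0 : ℝ) ≤ K := K.cast_nonneg
  have hU := workFactor_pos D hχ1 hM hL hlam hK hε.le
  exact R.le_stepsize hg hh hD hM hL hχ0 hχ1 (by positivity)
    (div_workFactor_lt D hχ1 hM hL hlam hK hε.le).le (div_workFactor_budget D hχ1 hlam hK hε hU) j

end Complexity

end UPB

theorem upb_complexity_general {E : Type*} [NormedAddCommGroup E] [InnerProductSpace ℝ E]
    {S : Set E} {f h : E → ℝ} {g : E → E} {M L D χ ε μ ν φstar U d : ℝ} {K : ℕ}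
    (hg : UPB.IsHybridOracle S f g M L) (hM : 0 < M) (hL : 0 ≤ L)
    (hD : ∀ a ∈ S, ∀ b ∈ S, ‖a - b‖ ≤ D) (hh : StrongConvexOn S ν h) (hν : 0 ≤ ν)
    (hφ : StrongConvexOn S μ (f + h)) (hχ0 : 0 ≤ χ) (hχ1 : χ < 1) (hε : 0 < ε)
    (R : UPB.Run S f h g χ ((1 - χ) * ε / 2) K) {X : Set E} (hX : X.Nonempty) (hXS : X ⊆ S)
    (hXφ : ∀ z ∈ X, f z + h z ≤ φstar) (hU : U = UPB.workFactor χ M L D (R.stepsize 0) K ε)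
    (hd : d = Metric.infDist (R.center 0) X) :
    (∃ j : ℕ, (j + 1 : ℝ) ≤ d ^ 2 * U / ε ^ 2
        + K * (⌈2 * Real.log (R.stepsize 0 * U / (K * ε))⌉ : ℝ) ∧
      f (R.iterate j) + h (R.iterate j) - φstar ≤ ε) ∧
    (0 < χ → 0 < μ →
      ∃ j : ℕ, (j + 1 : ℝ) ≤ 1 / χ * (K + U / (μ * ε)) * Real.log (1 + μ * d ^ 2 / ε)
          + K * (⌈2 * Real.log (R.stepsize 0 * U / (K * ε))⌉ : ℝ) ∧
        f (R.iterate j) + h (R.iterate j) - φstar ≤ ε) ∧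
    (0 < ν →
      ∃ j : ℕ, (j + 1 : ℝ) ≤ (K + U / (ν * ε)) * Real.log (1 + ν * d ^ 2 / ε)
          + K * (⌈2 * Real.log (R.stepsize 0 * U / (K * ε))⌉ : ℝ) ∧
        f (R.iterate j) + h (R.iterate j) - φstar ≤ ε) := by
  have hK : (0 : ℝ) < K := by exact_mod_cast R.length_pos
  have hlam := R.stepsize_zero_pos
  have hhconv : ConvexOn ℝ S h := strongConvexOn_zero.1 (hh.mono hν)
  have hT : (1 - χ) * ε / 2 ≤ ε / 2 := by linarith [mul_nonneg hχ0 hε.le]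
  have hlow := hU ▸ R.div_workFactor_le_stepsize hg hhconv hD hM hL hχ0 hχ1 hε
  have hfloor0 : K * ε / U < R.stepsize 0 := hU ▸ UPB.div_workFactor_lt D hχ1 hM hL hlam hK.le hε.le
  have hUpos : 0 < U := hU ▸ UPB.workFactor_pos D hχ1 hM hL hlam hK.le hε.le
  have hfloor : 0 < K * ε / U := by positivity
  have hratio : R.stepsize 0 * U / (K * ε) = R.stepsize 0 / (K * ε / U) := by field_simp
  rw [hd, hratio]
  refine ⟨?_, fun hχ hμ ↦ ?_, fun hν ↦ ?_⟩
  · convert R.exists_le_of_convexOn hhconv hχ0 hε hT hX hXS hXφ hfloor hfloor0 hlow using 5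
    field_simp
  · convert R.exists_le_of_strongConvexOn_add hhconv hφ hμ hχ hχ1 hε le_rfl hX hXS hXφ hfloor
      hfloor0 hlow using 6
    field_simp
    ring
  · convert R.exists_le_of_strongConvexOn hh hν hχ0 hε hT hX hXS hXφ hfloor hfloor0 hlow using 6
    field_simp
    ring

/-- Theorem `complprimal-2U-PBt`: total inner-iteration complexity of the
U-PB method. The execution of U-PB is modeled by the sequence of inner iterations
`j = 0, 1, 2, …`, with model `F j`, iterate `x j`, prox-center `c j`, stepsize `lam j`,
inner counter `N j` (value before the increment of step 2), monotone value `φb j` and gap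
`t j`; null, reset and serious updates are governed by the sign of
`t j − (1−χ)ε̄/2` and the counter. -/
theorem upb_complexity
    {n : ℕ} (f h : EuclideanSpace ℝ (Fin n) → ℝ)
    (domf domh : Set (EuclideanSpace ℝ (Fin n)))
    (f' : EuclideanSpace ℝ (Fin n) → EuclideanSpace ℝ (Fin n))
    (Mf Lf : ℝ) (hMf : 0 < Mf) (hLf : 0 ≤ Lf)
    (hsub : domh ⊆ domf)
    (hfconv : ConvexOn ℝ domf f) (hhconv : ConvexOn ℝ domh h)
    (hflsc : LowerSemicontinuousOn f domf) (hhlsc : LowerSemicontinuousOn h domh)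
    (horacle : ∀ x ∈ domh, ∀ u ∈ domf, f x + ⟪f' x, u - x⟫ ≤ f u)
    (hhybrid : ∀ x ∈ domh, ∀ y ∈ domh, ‖f' x - f' y‖ ≤ 2 * Mf + Lf * ‖x - y‖)
    (D : ℝ) (hD : 0 < D) (hdiam : ∀ a ∈ domh, ∀ b ∈ domh, ‖a - b‖ ≤ D)
    (μ ν : ℝ) (hμ0 : 0 ≤ μ) (hν0 : 0 ≤ ν) (hνμ : ν ≤ μ)
    (hφμ : ∀ a ∈ domh, ∀ b ∈ domh, ∀ α : ℝ, 0 ≤ α → α ≤ 1 →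
      f (α • a + (1 - α) • b) + h (α • a + (1 - α) • b)
        ≤ α * (f a + h a) + (1 - α) * (f b + h b) - α * (1 - α) * μ / 2 * ‖a - b‖ ^ 2)
    (hhν : ∀ a ∈ domh, ∀ b ∈ domh, ∀ α : ℝ, 0 ≤ α → α ≤ 1 →
      h (α • a + (1 - α) • b) ≤ α * h a + (1 - α) * h b - α * (1 - α) * ν / 2 * ‖a - b‖ ^ 2)
    (Xstar : Set (EuclideanSpace ℝ (Fin n)))
    (hXstar : Xstar = {z | z ∈ domh ∧ ∀ u ∈ domh, f z + h z ≤ f u + h u})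
    (hXne : Xstar.Nonempty)
    (φstar : ℝ) (hφstar : ∀ z ∈ Xstar, f z + h z = φstar)
    -- inputs of U-PB
    (x0 : EuclideanSpace ℝ (Fin n)) (hx0 : x0 ∈ domh)
    (χ lam0 ε : ℝ) (Nbar : ℕ)
    (hχ0 : 0 ≤ χ) (hχ1 : χ < 1) (hlam0 : 0 < lam0) (hε : 0 < ε) (hNbar : 1 ≤ Nbar)
    -- the execution of U-PB
    (F : ℕ → EuclideanSpace ℝ (Fin n) → ℝ)
    (x c : ℕ → EuclideanSpace ℝ (Fin n))
    (lam : ℕ → ℝ) (N : ℕ → ℕ) (φb t : ℕ → ℝ)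
    (hc0 : c 0 = x0) (hl0 : lam 0 = lam0) (hN0 : N 0 = 0)
    (hFconv : ∀ j, ConvexOn ℝ domf (F j))
    (hFle : ∀ j, ∀ u ∈ domf, F j u ≤ f u)
    (hFlow : ∀ j, N j = 0 → ∀ u ∈ domf, f (c j) + ⟪f' (c j), u - c j⟫ ≤ F j u)
    (hcdom : ∀ j, c j ∈ domh) (hxdom : ∀ j, x j ∈ domh)
    (hxmin : ∀ j, ∀ u ∈ domh,
      F j (x j) + h (x j) + ‖x j - c j‖ ^ 2 / (2 * lam j)
        ≤ F j u + h u + ‖u - c j‖ ^ 2 / (2 * lam j))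
    (hφb0 : ∀ j, N j = 0 →
      φb j = f (x j) + h (x j) + χ / (2 * lam j) * ‖x j - c j‖ ^ 2)
    (hφbrec : ∀ j, N j ≠ 0 →
      φb j = min (φb (j - 1)) (f (x j) + h (x j) + χ / (2 * lam j) * ‖x j - c j‖ ^ 2))
    (ht : ∀ j, t j = φb j - (F j (x j) + h (x j) + ‖x j - c j‖ ^ 2 / (2 * lam j)))
    (hnull : ∀ j, (1 - χ) * ε / 2 < t j → N j + 1 < Nbar →
      c (j + 1) = c j ∧ lam (j + 1) = lam j ∧ N (j + 1) = N j + 1 ∧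
      ∃ fbar : EuclideanSpace ℝ (Fin n) → ℝ,
        ConvexOn ℝ domf fbar ∧ (∀ u ∈ domf, fbar u ≤ f u) ∧
        fbar (x j) = F j (x j) ∧
        (∀ u ∈ domh, fbar (x j) + h (x j) + ‖x j - c j‖ ^ 2 / (2 * lam j)
          ≤ fbar u + h u + ‖u - c j‖ ^ 2 / (2 * lam j)) ∧
        (∀ u ∈ domf, fbar u ≤ F (j + 1) u) ∧
        (∀ u ∈ domf, f (x j) + ⟪f' (x j), u - x j⟫ ≤ F (j + 1) u))
    (hreset : ∀ j, (1 - χ) * ε / 2 < t j → N j + 1 = Nbar →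
      c (j + 1) = c j ∧ lam (j + 1) = lam j / 2 ∧ N (j + 1) = 0)
    (hserious : ∀ j, t j ≤ (1 - χ) * ε / 2 →
      c (j + 1) = x j ∧ lam (j + 1) = lam j ∧ N (j + 1) = 0)
    (B U d0 : ℝ)
    (hB : B = 8 + 12 * Real.log (1 + Lf ^ 2 * D ^ 2 * Nbar / (16 * Mf ^ 2)))
    (hU : U = 4 * (Mf ^ 2 + ε * Lf) * B / (1 - χ) ^ 2 + Nbar * ε / lam0)
    (hd0 : d0 = Metric.infDist x0 Xstar) :
    (∃ j : ℕ, (j + 1 : ℝ) ≤ d0 ^ 2 * U / ε ^ 2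
        + Nbar * (⌈2 * Real.log (lam0 * U / (Nbar * ε))⌉ : ℝ) ∧
      f (x j) + h (x j) - φstar ≤ ε) ∧
    (0 < χ → 0 < μ →
      ∃ j : ℕ, (j + 1 : ℝ) ≤ 1 / χ * (Nbar + U / (μ * ε)) * Real.log (1 + μ * d0 ^ 2 / ε)
          + Nbar * (⌈2 * Real.log (lam0 * U / (Nbar * ε))⌉ : ℝ) ∧
        f (x j) + h (x j) - φstar ≤ ε) ∧
    (0 < ν →
      ∃ j : ℕ, (j + 1 : ℝ) ≤ (Nbar + U / (ν * ε)) * Real.log (1 + μ * d0 ^ 2 / ε)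
          + Nbar * (⌈2 * Real.log (lam0 * U / (Nbar * ε))⌉ : ℝ) ∧
        f (x j) + h (x j) - φstar ≤ ε) := by
  have hXdom (z) (hz : z ∈ Xstar) : z ∈ domh := (hXstar ▸ hz : z ∈ {z | _}).1
  let R : UPB.Run domh f h f' χ ((1 - χ) * ε / 2) Nbar :=
    { model := F, iterate := x, center := c, stepsize := lam, counter := N, value := φb, gap := t
      length_pos := hNbar, center_zero_mem := hcdom 0, stepsize_zero_pos := hl0 ▸ hlam0
      counter_zero := hN0, model_convexOn := fun j ↦ (hFconv j).subset hsub hhconv.1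
      model_le := fun j u hu ↦ hFle j u (hsub hu)
      linearization_le_model := fun j hj u hu ↦ hFlow j hj u (hsub hu)
      iterate_mem := hxdom, isMinOn_iterate := hxmin, value_of_counter_eq_zero := hφb0
      value_of_counter_ne_zero := hφbrec, gap_eq := ht
      null := fun j hj hN ↦
        have ⟨hc, hlam, hcount, fbar, hconv, _, heq, hmin, hle, hlin⟩ := hnull j hj hN
        ⟨hc, hlam, hcount, fbar, hconv.subset hsub hhconv.1, heq, hmin,
          fun u hu ↦ hle u (hsub hu), fun u hu ↦ hlin u (hsub hu)⟩
      reset := hreset, serious := hserious }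
  have hU_eq : U = UPB.workFactor χ Mf Lf D (R.stepsize 0) Nbar ε := by rw [hU, hB, ← hl0]; rfl
  have hU0 : 0 ≤ U :=
    hU_eq ▸ (UPB.workFactor_pos D hχ1 hMf hLf R.stepsize_zero_pos Nbar.cast_nonneg hε.le).le
  obtain ⟨hi, hii, hiii⟩ := upb_complexity_general
    ⟨fun x hx u hu ↦ horacle x hx u (hsub hu), hhybrid⟩ hMf hLf hdiam
    (UPB.strongConvexOn_of_combo_le hhconv.1 hhν) hν0
    (UPB.strongConvexOn_of_combo_le hhconv.1 hφμ) hχ0 hχ1 hε R hXne hXdom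
    (fun z hz ↦ (hφstar z hz).le) hU_eq (hd0.trans (by rw [← hc0]))
  rw [← hl0]
  exact ⟨hi, hii, fun hν ↦ (hiii hν).imp fun j hj ↦ ⟨hj.1.trans (by gcongr), hj.2⟩⟩
end

section
/- Assume M_f > 0, that ‖x − y‖ ≤ D for all x, y ∈ dom h (for some D > 0), and that the first model of the cycle satisfies ℓ_f(·; x̂) ≤ f_i. Let N̄ ≥ 1 be an integer and set B := 8 + 12·log(1 + L_f²D²N̄/(16M_f²)). If the stepsize satisfies λ ≤ (1−χ)²N̄ε̄ / (2(M_f² + ε̄L_f)B), and the cycle hypotheses (prox subproblem minimizers, monotone values φ̄_ℓ, and bundle updates between consecutive iterations) hold for iterations ℓ = i, …, i+N̄−1, then there exists an index ℓ with i ≤ ℓ ≤ i+N̄−1 such that t_ℓ ≤ (1−χ)ε̄/2; that is, the cycle must be a serious one. -/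
open scoped RealInnerProductSpace

/-!
Put `ω = 1 - χ`, let `a k` be the gap after `k` further iterations and `d k` the distance between
consecutive iterates. Strong convexity of the prox subproblem gives
`a (k + 1) + (d k)² / (2λ) ≤ a k`, and linearizing `f` at the previous iterate bounds `a (k + 1)`
by its linearization error minus `ω / (2λ)` times the squared distance to the prox-center.

If `L D ≤ M / 16`, Jung's theorem puts all subgradients in a ball of radius about `√2 M`; around its
center the linearization errors telescope, and summing with triangular weights yields a rate
`O(λ M² / (ω N))` whose constant suffices. Otherwise the two inequalities form a scalar
recursion `a' + d² ≤ a`, `a' ≤ d + b d²` (after rescaling, with `b = λ L`), for which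
`a⁻¹ - (2 b + 1) log a` grows by one per step. The logarithmic factor in the stepsize pays for the
initial value of this potential, provided `L D` is not small compared to `M`.
-/

section LogarithmicPotential

/-- The potential `a⁻¹ - (2 b + 1) log a`, which gains at least one unit per step of the scalar
recursion `a' + d² ≤ a`, `a' ≤ d + b d²`. -/
noncomputable def logPotential (b a : ℝ) : ℝ := a⁻¹ - (2 * b + 1) * Real.log a

variable {b : ℝ}

lemma logPotential_strictAntiOn (hb : 0 ≤ b) : StrictAntiOn (logPotential b) (Set.Ioi 0) := by
  intro a ha a' _ haa'
  have hinv : a'⁻¹ < a⁻¹ := inv_strictAnti₀ ha haa'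
  have hlog : (2 * b + 1) * Real.log a ≤ (2 * b + 1) * Real.log a' := by
    gcongr
  unfold logPotential
  linarith

lemma sq_le_sq_mul_of_le_add_mul_sq {a d : ℝ} (hb : 0 ≤ b) (ha : 0 ≤ a)
    (h : a ≤ d + b * d ^ 2) : a ^ 2 ≤ d ^ 2 * (1 + 2 * b * a) := by
  have hbd : 0 ≤ b * d ^ 2 := by positivity
  rcases le_total a (b * d ^ 2) with hle | hle
  · nlinarith
  · nlinarith [pow_le_pow_left₀ (sub_nonneg.2 hle) (sub_le_iff_le_add.2 h) 2]

lemma logPotential_add_one_le {a a' d : ℝ} (hb : 0 ≤ b) (ha' : 0 < a')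
    (hdesc : a' + d ^ 2 ≤ a) (hgap : a' ≤ d + b * d ^ 2) :
    logPotential b a + 1 ≤ logPotential b a' := by
  have ha : 0 < a := by nlinarith
  have hdecr : a * a' ≤ (a - a') * (1 + (2 * b + 1) * a') := by
    nlinarith [sq_le_sq_mul_of_le_add_mul_sq hb ha'.le hgap,
      mul_le_mul_of_nonneg_right (show d ^ 2 ≤ a - a' by linarith)
        (show 0 ≤ 1 + 2 * b * a' by positivity)]
  have hlog : 1 - a' / a ≤ Real.log a - Real.log a' := by
    rw [← Real.log_div ha.ne' ha'.ne', ← inv_div a a']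
    exact Real.one_sub_inv_le_log_of_pos (by positivity)
  have hlin : 1 ≤ a'⁻¹ - a⁻¹ + (2 * b + 1) * (1 - a' / a) := by
    calc (1 : ℝ) ≤ (a - a') * (1 + (2 * b + 1) * a') / (a * a') :=
          (one_le_div (by positivity)).2 hdecr
      _ = a'⁻¹ - a⁻¹ + (2 * b + 1) * (1 - a' / a) := by field_simp
  unfold logPotential
  nlinarith [mul_le_mul_of_nonneg_left hlog (show 0 ≤ 2 * b + 1 by linarith)]

variable {N : ℕ} {a d : ℕ → ℝ}

lemma logPotential_add_natCast_le (hb : 0 ≤ b) (hpos : ∀ k < N, 0 < a k)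
    (hdesc : ∀ k, k + 1 < N → a (k + 1) + d k ^ 2 ≤ a k)
    (hgap : ∀ k, k + 1 < N → a (k + 1) ≤ d k + b * d k ^ 2) {k : ℕ} (hk : k < N) :
    logPotential b (a 0) + k ≤ logPotential b (a k) := by
  induction k with
  | zero => simp
  | succ k ih =>
    have hstep := logPotential_add_one_le hb (hpos _ hk) (hdesc k hk) (hgap k hk)
    push_cast
    linarith [ih (by omega)]

lemma exists_le_of_logPotential_le {θ : ℝ} (hb : 0 ≤ b) (hθ : 0 < θ) (hN : 1 ≤ N)
    (hdesc : ∀ k, k + 1 < N → a (k + 1) + d k ^ 2 ≤ a k)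
    (hgap : ∀ k, k + 1 < N → a (k + 1) ≤ d k + b * d k ^ 2)
    (hθN : θ < a 0 → logPotential b θ + 1 ≤ logPotential b (a 0) + N) :
    ∃ k < N, a k ≤ θ := by
  by_contra! hlarge
  have hpos : ∀ k < N, 0 < a k := fun k hk => hθ.trans (hlarge k hk)
  have hlast : N - 1 < N := by omega
  have htel := logPotential_add_natCast_le hb hpos hdesc hgap hlast
  have hanti := logPotential_strictAntiOn hb hθ (hpos _ hlast) (hlarge _ hlast)
  have hfirst := hθN (hlarge 0 hN)
  push_cast [hN] at htel
  linarith

end LogarithmicPotential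

section StepsizeArithmetic

lemma log_twenty_le_three : Real.log 20 ≤ 3 := by
  rw [show (20 : ℝ) = 2 ^ 2 * 5 by norm_num, Real.log_mul (by norm_num) (by norm_num),
    Real.log_pow]
  push_cast
  linarith [Real.log_two_lt_d9, Real.log_five_lt_d9]

lemma log_le_div_twenty_add_two {y : ℝ} (hy : 0 < y) : Real.log y ≤ y / 20 + 2 := by
  have htangent := Real.log_le_sub_one_of_pos (show 0 < y / 20 by positivity)
  rw [Real.log_div hy.ne' (by norm_num)] at htangent
  linarith [log_twenty_le_three]

lemma log_le_three_add_six_mul_log {y ρ : ℝ} (hy : 0 < y) (hyρ : y ≤ 130 * ρ) :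
    Real.log y ≤ 3 + 6 * Real.log (1 + ρ) := by
  have hρ : 0 < ρ := by linarith
  have hpow : y ≤ 20 * (1 + ρ) ^ 6 := by
    calc y ≤ 20 * (1 + (3 : ℕ) * (2 * ρ + ρ ^ 2)) := by
          push_cast
          nlinarith [sq_nonneg (12 * ρ - 1)]
      _ ≤ 20 * (1 + (2 * ρ + ρ ^ 2)) ^ 3 := by
          gcongr
          exact one_add_mul_le_pow (by linarith [sq_nonneg ρ]) 3
      _ = 20 * (1 + ρ) ^ 6 := by ring
  have hlog := Real.log_le_log hy hpow
  rw [Real.log_mul (by norm_num) (by positivity), Real.log_pow] at hlog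
  push_cast at hlog
  linarith [log_twenty_le_three]

lemma le_one_add_log_mul_of_div_le {N ρ : ℝ} (hN : 0 ≤ N) (hρ : N / 4096 ≤ ρ) :
    N ≤ (1 + 3 / 2 * Real.log (1 + ρ)) * (19 / 20 * N + 2) := by
  have hlog : 3 * N / (N + 8192) ≤ 3 / 2 * Real.log (1 + ρ) := by
    calc 3 * N / (N + 8192) = 3 / 2 * (2 * (N / 4096) / (N / 4096 + 2)) := by field_simp; ring
      _ ≤ 3 / 2 * Real.log (1 + N / 4096) := by
          gcongr
          exact Real.le_log_one_add_of_nonneg (by positivity)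
      _ ≤ 3 / 2 * Real.log (1 + ρ) := by gcongr
  calc N ≤ (1 + 3 * N / (N + 8192)) * (19 / 20 * N + 2) := by
        rw [one_add_div (by positivity), div_mul_eq_mul_div, le_div_iff₀ (by positivity)]
        nlinarith [sq_nonneg (N - 72)]
    _ ≤ _ := by gcongr

variable {N ω b X a u r : ℝ}

lemma potential_budget_of_small_curvature (hN : 0 ≤ N) (hb : 0 ≤ b) (hω1 : ω ≤ 1)
    (hbω : b < ω / 2) (hu : 0 ≤ u) (hX : 0 < X) (ha : 0 < a) (hXa : 1 < X * a)
    (hgain : N ≤ (1 + u) * (19 / 20 * N + 2))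
    (hstep : (X + 16 * b / ω) * (1 + u) ≤ ω * N) (hstart : a ≤ r + (b - ω) * r ^ 2) :
    X + (2 * b + 1) * Real.log (X * a) + 1 ≤ a⁻¹ + N := by
  have hω : 0 < ω := by linarith
  set Q := N / (1 + u) with hQ
  have hQN : Q ≤ N := div_le_self hN (by linarith)
  have hQgain : Q ≤ 19 / 20 * N + 2 := (div_le_iff₀' (by linarith)).2 hgain
  have hstepQ : X + 16 * b ≤ ω * Q := by
    have : 16 * b ≤ 16 * b / ω := le_div_self (by positivity) hω hω1
    have : X + 16 * b / ω ≤ ω * Q := by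
      rwa [hQ, ← mul_div_assoc, le_div_iff₀ (by linarith)]
    linarith
  have hamax : 4 * (ω - b) * a ≤ 1 := by
    nlinarith [sq_nonneg (1 - 2 * (ω - b) * r)]
  have hainv : 4 * (ω - b) ≤ a⁻¹ := by rwa [← one_div, le_div_iff₀ ha]
  have hXainv : a⁻¹ ≤ X := ((inv_lt_iff_one_lt_mul₀ ha).2 hXa).le
  have hQ4 : 4 ≤ Q := le_of_mul_le_mul_left (by linarith) hω
  have hXaN : X * a ≤ N / 2 := by
    have : X ≤ ω * N := by nlinarith
    nlinarith [mul_le_mul_of_nonneg_right this ha.le]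
  have hlog : Real.log (X * a) ≤ N / 40 + 2 := by
    linarith [log_le_div_twenty_add_two (mul_pos hX ha)]
  have hωQ : (1 - ω) * 4 ≤ (1 - ω) * Q := by gcongr
  suffices (2 * b + 1) * (N / 40 + 2) ≤ N - Q + 12 * b + 3 by
    nlinarith [mul_le_mul_of_nonneg_left hlog (show 0 ≤ 2 * b + 1 by linarith)]
  rcases le_total N 40 with _ | _ <;> nlinarith

lemma potential_budget_of_large_curvature {R ρ : ℝ} (hω : 0 < ω) (hω1 : ω ≤ 1)
    (hbω : ω / 2 ≤ b) (hX : 0 < X) (ha : 0 < a)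
    (hr : 0 ≤ r) (hrR : r ≤ R) (hρ : ρ = (b * R) ^ 2 * N) (hbR : 1 / 64 ≤ b * R)
    (hu : u = 3 / 2 * Real.log (1 + ρ)) (hN : 0 ≤ N)
    (hstep : (X + 16 * b / ω) * (1 + u) ≤ ω * N) (hstart : a ≤ r + (b - ω) * r ^ 2) :
    X + (2 * b + 1) * Real.log (X * a) + 1 ≤ a⁻¹ + N := by
  have hb : 0 < b := by linarith
  have hρ0 : 0 ≤ ρ := by rw [hρ]; positivity
  have hu0 : 0 ≤ u := by
    rw [hu]
    exact mul_nonneg (by norm_num) (Real.log_nonneg (by linarith))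
  have hmix : 4 * (2 * b + 1) ≤ 16 * b / ω := by
    rw [le_div_iff₀ hω]
    nlinarith
  have hXN : X ≤ 2 * b * N := by nlinarith
  have haR : a ≤ R + b * R ^ 2 := by
    have : r ^ 2 ≤ R ^ 2 := pow_le_pow_left₀ hr hrR 2
    nlinarith
  have hXa : X * a ≤ 130 * ρ := by
    have hbRN : b * R * N ≤ 64 * ρ := by
      rw [hρ]
      nlinarith [mul_le_mul_of_nonneg_right hbR (mul_nonneg (by linarith : 0 ≤ b * R) hN)]
    calc X * a ≤ 2 * b * N * (R + b * R ^ 2) := by gcongr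
      _ = 2 * (b * R * N) + 2 * ρ := by rw [hρ]; ring
      _ ≤ 130 * ρ := by linarith
  have hlog : Real.log (X * a) ≤ 3 + 4 * u := by
    linarith [log_le_three_add_six_mul_log (mul_pos hX ha) hXa]
  have hbudget : (X + 4 * (2 * b + 1)) * (1 + u) ≤ N := by
    calc (X + 4 * (2 * b + 1)) * (1 + u) ≤ (X + 16 * b / ω) * (1 + u) := by gcongr
      _ ≤ ω * N := hstep
      _ ≤ N := mul_le_of_le_one_left hN hω1
  have hXu : 0 ≤ X * u := by positivity
  nlinarith [mul_le_mul_of_nonneg_left hlog (show 0 ≤ 2 * b + 1 by linarith), inv_pos.2 ha]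

lemma logPotential_inv_add_one_le {R ρ : ℝ} (hN : 0 ≤ N) (hb : 0 ≤ b) (hω : 0 < ω) (hω1 : ω ≤ 1)
    (hX : 0 < X) (hXa : X⁻¹ < a) (hr : 0 ≤ r) (hrR : r ≤ R) (hρ : ρ = (b * R) ^ 2 * N)
    (hbR : 1 / 64 ≤ b * R)
    (hstep : (X + 16 * b / ω) * (1 + 3 / 2 * Real.log (1 + ρ)) ≤ ω * N)
    (hstart : a ≤ r + (b - ω) * r ^ 2) :
    logPotential b X⁻¹ + 1 ≤ logPotential b a + N := by
  have ha : 0 < a := (inv_pos.2 hX).trans hXa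
  have hρN : N / 4096 ≤ ρ := by
    rw [hρ]
    nlinarith [mul_le_mul_of_nonneg_right (pow_le_pow_left₀ (by norm_num) hbR 2) hN]
  suffices X + (2 * b + 1) * Real.log (X * a) + 1 ≤ a⁻¹ + N by
    rw [Real.log_mul hX.ne' ha.ne'] at this
    simp only [logPotential, inv_inv, Real.log_inv]
    linarith
  rcases lt_or_ge b (ω / 2) with hbω | hbω
  · refine potential_budget_of_small_curvature hN hb hω1 hbω ?_ hX ha
      ((inv_lt_iff_one_lt_mul₀' hX).1 hXa) (le_one_add_log_mul_of_div_le hN hρN) hstep hstart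
    have : 0 ≤ N / 4096 := by positivity
    exact mul_nonneg (by norm_num) (Real.log_nonneg (by linarith))
  · exact potential_budget_of_large_curvature hω hω1 hbω hX ha hr hrR hρ hbR rfl hN hstep hstart

lemma normalized_stepsize_le {lam ω N ε M L T : ℝ} (hω : 0 < ω) (hM : 0 < M) (hL : 0 ≤ L)
    (hε : 0 < ε) (hT : 0 ≤ T)
    (hstep : lam ≤ ω ^ 2 * N * ε / (2 * (M ^ 2 + ε * L) * (8 + 12 * T))) :
    (16 * lam * M ^ 2 / (ω * ε) + 16 * (lam * L) / ω) * (1 + 3 / 2 * T) ≤ ω * N := by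
  rw [le_div_iff₀ (by positivity)] at hstep
  calc (16 * lam * M ^ 2 / (ω * ε) + 16 * (lam * L) / ω) * (1 + 3 / 2 * T)
      = lam * (2 * (M ^ 2 + ε * L) * (8 + 12 * T)) / (ω * ε) := by field_simp; ring
    _ ≤ ω ^ 2 * N * ε / (ω * ε) := by gcongr
    _ = ω * N := by field_simp

lemma log_one_add_curvature_nonneg (L D M : ℝ) (N : ℕ) :
    0 ≤ Real.log (1 + L ^ 2 * D ^ 2 * N / (16 * M ^ 2)) :=
  Real.log_nonneg (le_add_of_nonneg_right (by positivity))

lemma exists_le_of_hybrid_recursion {M L D lam ω ε r : ℝ} {N : ℕ} {t d : ℕ → ℝ}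
    (hM : 0 < M) (hL : 0 ≤ L) (hω : 0 < ω) (hω1 : ω ≤ 1) (hlam : 0 < lam) (hε : 0 < ε)
    (hN : 1 ≤ N) (hLD : M / 16 ≤ L * D) (hr : 0 ≤ r) (hrD : r ≤ D)
    (hstep : lam ≤ ω ^ 2 * N * ε / (2 * (M ^ 2 + ε * L)
      * (8 + 12 * Real.log (1 + L ^ 2 * D ^ 2 * N / (16 * M ^ 2)))))
    (hstart : t 0 ≤ 2 * M * r + L / 2 * r ^ 2 - ω * (r ^ 2 / (2 * lam)))
    (hdesc : ∀ k, k + 1 < N → t (k + 1) + d k ^ 2 / (2 * lam) ≤ t k)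
    (hgap : ∀ k, k + 1 < N → t (k + 1) ≤ 2 * M * d k + L / 2 * d k ^ 2) :
    ∃ k < N, t k ≤ ω * ε / 2 := by
  have hgapScale : 0 < 8 * lam * M ^ 2 := by positivity
  set X := 16 * lam * M ^ 2 / (ω * ε) with hX
  have hX0 : 0 < X := by positivity
  have hXinv : X⁻¹ = ω * ε / 2 / (8 * lam * M ^ 2) := by rw [hX]; field_simp; norm_num
  have hbR : 1 / 64 ≤ lam * L * (D / (4 * lam * M)) := by
    calc (1 : ℝ) / 64 = M / 16 / (4 * M) := by field_simp; norm_num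
      _ ≤ L * D / (4 * M) := by gcongr
      _ = lam * L * (D / (4 * lam * M)) := by field_simp
  suffices ∃ k < N, t k / (8 * lam * M ^ 2) ≤ X⁻¹ by
    simpa only [hXinv, div_le_div_iff_of_pos_right hgapScale] using this
  refine exists_le_of_logPotential_le (b := lam * L) (d := fun k => d k / (4 * lam * M))
    (by positivity) (inv_pos.2 hX0) hN (fun k hk => ?_) (fun k hk => ?_) fun hlarge => ?_
  · calc t (k + 1) / (8 * lam * M ^ 2) + (d k / (4 * lam * M)) ^ 2
        = (t (k + 1) + d k ^ 2 / (2 * lam)) / (8 * lam * M ^ 2) := by field_simp; ring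
      _ ≤ t k / (8 * lam * M ^ 2) := by gcongr; exact hdesc k hk
  · calc t (k + 1) / (8 * lam * M ^ 2)
        ≤ (2 * M * d k + L / 2 * d k ^ 2) / (8 * lam * M ^ 2) := by gcongr; exact hgap k hk
      _ = d k / (4 * lam * M) + lam * L * (d k / (4 * lam * M)) ^ 2 := by field_simp; ring
  · refine logPotential_inv_add_one_le (r := r / (4 * lam * M)) (R := D / (4 * lam * M))
      N.cast_nonneg (by positivity) hω hω1 hX0 hlarge (by positivity) (by gcongr)
      (by field_simp; norm_num) hbR
      (normalized_stepsize_le hω hM hL hε (log_one_add_curvature_nonneg L D M N) hstep) ?_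
    calc t 0 / (8 * lam * M ^ 2)
        ≤ (2 * M * r + L / 2 * r ^ 2 - ω * (r ^ 2 / (2 * lam))) / (8 * lam * M ^ 2) := by gcongr
      _ = r / (4 * lam * M) + (lam * L - ω) * (r / (4 * lam * M)) ^ 2 := by field_simp; ring

end StepsizeArithmetic

section WeightedSummation

lemma harmonic_le_div_four_add (k : ℕ) : (harmonic k : ℝ) ≤ k / 4 + 13 / 12 := by
  rcases lt_or_ge k 3 with hk | hk
  · interval_cases k <;> norm_num [harmonic_succ]
  · induction k, hk using Nat.le_induction with
    | base => norm_num [harmonic_succ]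
    | succ k hk ih =>
      have hinv : ((k : ℝ) + 1)⁻¹ ≤ 4⁻¹ := by
        gcongr
        exact_mod_cast Nat.succ_le_succ hk
      rw [harmonic_succ]
      push_cast
      linarith

lemma mul_sub_mul_sq_le {c : ℝ} (hc : 0 < c) (κ r : ℝ) :
    κ * r - c * r ^ 2 ≤ κ ^ 2 / (4 * c) := by
  rw [le_div_iff₀ (by positivity)]
  nlinarith [sq_nonneg (κ - 2 * c * r)]

/-- The scalar recursion satisfied by the gaps `a` of a bundle cycle when all subgradients lie
within `κ` of a common vector: `d` is the step length, `r` the distance to the prox-center, and `v`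
the increment of `f` from the prox-center, corrected by the common linear form. -/
structure CenteredRecursion (N : ℕ) (κ ω α : ℝ) (a d r v : ℕ → ℝ) : Prop where
  start : a 0 ≤ κ * r 0 + v 0 - ω * α * r 0 ^ 2
  abs_value_le : ∀ k < N, |v k| ≤ κ * r k
  descent : ∀ k, k + 1 < N → a (k + 1) + α * d k ^ 2 ≤ a k
  gap : ∀ k, k + 1 < N → a (k + 1) ≤ κ * d k + (v (k + 1) - v k) - ω * α * r (k + 1) ^ 2

namespace CenteredRecursion

variable {N : ℕ} {κ ω α : ℝ} {a d r v : ℕ → ℝ}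

lemma weighted_step (H : CenteredRecursion N κ ω α a d r v) (hα : 0 < α) (hω : 0 < ω)
    (hω1 : ω ≤ 1) {k : ℕ} (hk : k + 1 < N) :
    (k + 2) * (k + 3) / 2 * a (k + 1) - (k + 2) * v (k + 1) + (k + 2) * (ω * α) * r (k + 1) ^ 2
      ≤ (k + 1) * (k + 2) / 2 * a k - (k + 1) * v k + κ * r k
        + κ ^ 2 / (ω * α) * (1 / 2 + 1 / (2 * (k + 1))) := by
  have hd : (k + 2) * (κ * d k) - (k + 1) * (k + 2) / 2 * (α * d k ^ 2)
      ≤ κ ^ 2 / (ω * α) * (1 / 2 + 1 / (2 * (k + 1))) := by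
    calc (k + 2) * (κ * d k) - (k + 1) * (k + 2) / 2 * (α * d k ^ 2)
        = (k + 2) * (κ * d k - (k + 1) / 2 * α * d k ^ 2) := by ring
      _ ≤ (k + 2) * (κ ^ 2 / (4 * ((k + 1) / 2 * α))) := by
          gcongr
          exact mul_sub_mul_sq_le (by positivity) κ (d k)
      _ = κ ^ 2 / (1 * α) * (1 / 2 + 1 / (2 * (k + 1))) := by field_simp; ring
      _ ≤ κ ^ 2 / (ω * α) * (1 / 2 + 1 / (2 * (k + 1))) := by gcongr
  have hdesc := mul_le_mul_of_nonneg_left (H.descent k hk)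
    (show 0 ≤ ((k : ℝ) + 1) * (k + 2) / 2 by positivity)
  have hgap := mul_le_mul_of_nonneg_left (H.gap k hk) (show 0 ≤ (k : ℝ) + 2 by positivity)
  linarith [neg_le_of_abs_le (H.abs_value_le k (by omega))]

lemma weighted_potential_le (H : CenteredRecursion N κ ω α a d r v) (hα : 0 < α) (hω : 0 < ω)
    (hω1 : ω ≤ 1) {k : ℕ} (hk : k < N) :
    (k + 1) * (k + 2) / 2 * a k - (k + 1) * v k + κ * r k
      ≤ κ ^ 2 / (ω * α) * (3 / 4 + k / 2 + 3 / 4 * harmonic k + 1 / (4 * (k + 1))) := by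
  induction k with
  | zero =>
    have hr := mul_sub_mul_sq_le (mul_pos hω hα) (2 * κ) (r 0)
    rw [mul_pow, show (2 : ℝ) ^ 2 = 4 by norm_num, mul_div_mul_left _ _ four_ne_zero] at hr
    simp only [Nat.cast_zero, harmonic_zero, Rat.cast_zero]
    linarith [H.start]
  | succ k ih =>
    have hstep := H.weighted_step hα hω hω1 hk
    have hr := mul_sub_mul_sq_le (show 0 < (k + 2) * (ω * α) by positivity) κ (r (k + 1))
    have hsum : κ ^ 2 / (ω * α) * (3 / 4 + (k + 1 : ℕ) / 2 + 3 / 4 * harmonic (k + 1)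
          + 1 / (4 * ((k + 1 : ℕ) + 1)))
        = κ ^ 2 / (ω * α) * (3 / 4 + k / 2 + 3 / 4 * harmonic k + 1 / (4 * (k + 1)))
          + κ ^ 2 / (ω * α) * (1 / 2 + 1 / (2 * (k + 1)))
          + κ ^ 2 / (4 * ((k + 2) * (ω * α))) := by
      rw [harmonic_succ]
      push_cast
      field_simp
      ring
    rw [hsum]
    push_cast
    linarith [ih (by omega)]

lemma triangular_mul_gap_le (H : CenteredRecursion N κ ω α a d r v) (hα : 0 < α) (hω : 0 < ω)
    (hω1 : ω ≤ 1) {k : ℕ} (hk : k < N) :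
    (k + 1) * (k + 2) / 2 * a k ≤ κ ^ 2 / (ω * α) * (1 + 3 / 4 * (k + harmonic k)) := by
  cases k with
  | zero =>
    have hpot := H.weighted_potential_le hα hω hω1 hk
    simp only [Nat.cast_zero, harmonic_zero, Rat.cast_zero] at hpot ⊢
    linarith [le_of_abs_le (H.abs_value_le 0 hk)]
  | succ k =>
    have hpot := H.weighted_potential_le hα hω hω1 (show k < N by omega)
    have hstep := H.weighted_step hα hω hω1 hk
    have hr := mul_le_mul_of_nonneg_left (mul_sub_mul_sq_le (mul_pos hω hα) κ (r (k + 1)))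
      (show 0 ≤ (k : ℝ) + 2 by positivity)
    have hv := mul_le_mul_of_nonneg_left (le_of_abs_le (H.abs_value_le _ hk))
      (show 0 ≤ (k : ℝ) + 2 by positivity)
    have hsum : κ ^ 2 / (ω * α) * (1 + 3 / 4 * ((k + 1 : ℕ) + harmonic (k + 1)))
        = κ ^ 2 / (ω * α) * (3 / 4 + k / 2 + 3 / 4 * harmonic k + 1 / (4 * (k + 1)))
          + κ ^ 2 / (ω * α) * (1 / 2 + 1 / (2 * (k + 1)))
          + (k + 2) * (κ ^ 2 / (4 * (ω * α))) := by
      rw [harmonic_succ]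
      push_cast
      field_simp
      ring
    rw [hsum]
    push_cast
    linarith

lemma last_gap_le (H : CenteredRecursion N κ ω α a d r v) (hα : 0 < α) (hω : 0 < ω) (hω1 : ω ≤ 1)
    (hN : 1 ≤ N) : ω * N * a (N - 1) ≤ 15 / 8 * (κ ^ 2 / α) := by
  obtain ⟨k, rfl⟩ : ∃ k, N = k + 1 := ⟨N - 1, by omega⟩
  have hlast := H.triangular_mul_gap_le hα hω hω1 k.lt_succ_self
  rw [Nat.add_sub_cancel]
  push_cast
  refine le_of_mul_le_mul_left ?_ (show 0 < ((k : ℝ) + 2) / 2 by positivity)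
  calc ((k : ℝ) + 2) / 2 * (ω * (k + 1) * a k) = ω * ((k + 1) * (k + 2) / 2 * a k) := by ring
    _ ≤ ω * (κ ^ 2 / (ω * α) * (1 + 3 / 4 * (k + harmonic k))) := by gcongr
    _ = κ ^ 2 / α * (1 + 3 / 4 * (k + harmonic k)) := by field_simp
    _ ≤ κ ^ 2 / α * (1 + 3 / 4 * (k + (k / 4 + 13 / 12))) := by
        gcongr
        exact harmonic_le_div_four_add k
    _ ≤ κ ^ 2 / α * (15 / 8 * ((k + 2) / 2)) := by gcongr; linarith
    _ = ((k : ℝ) + 2) / 2 * (15 / 8 * (κ ^ 2 / α)) := by ring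

end CenteredRecursion

end WeightedSummation

lemma le_of_forall_one_sub_mul_le {Q C : ℝ} (h : ∀ s ∈ Set.Ioo (0 : ℝ) 1, (1 - s) * Q ≤ C) :
    Q ≤ C := by
  have hlim : Filter.Tendsto (fun s : ℝ => (1 - s) * Q) (nhdsWithin 0 (Set.Ioi 0)) (nhds Q) := by
    refine Filter.Tendsto.mono_left ?_ nhdsWithin_le_nhds
    exact Continuous.tendsto' (by fun_prop) _ _ (by ring)
  exact le_of_tendsto hlim (Filter.eventually_of_mem (Ioo_mem_nhdsGT one_pos) h)

lemma le_of_forall_sub_le_mul_sq {G : ℝ → ℝ} {C : ℝ}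
    (h : ∀ s t, 0 ≤ s → s ≤ t → t ≤ 1 → G t - G s ≤ C * (t - s) ^ 2) : G 1 ≤ G 0 := by
  have hpartition : ∀ n : ℕ, 0 < n → G 1 - G 0 ≤ C / n := by
    intro n hn
    have hn' : (0 : ℝ) < n := Nat.cast_pos.2 hn
    calc G 1 - G 0 = ∑ k ∈ Finset.range n, (G ((k + 1 : ℕ) / n) - G ((k : ℕ) / n)) := by
          rw [Finset.sum_range_sub (fun k : ℕ => G (k / n)), div_self hn'.ne', Nat.cast_zero,
            zero_div]
      _ ≤ ∑ k ∈ Finset.range n, C * ((k + 1 : ℕ) / n - k / n) ^ 2 := by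
          refine Finset.sum_le_sum fun k hk => h _ _ (by positivity) ?_ ?_
          · gcongr
            exact k.le_succ
          · rw [div_le_one hn']
            exact_mod_cast Finset.mem_range.1 hk
      _ = C / n := by
          push_cast
          simp only [← sub_div, add_sub_cancel_left, Finset.sum_const, Finset.card_range,
            nsmul_eq_mul]
          field_simp
  refine sub_nonpos.1 (ge_of_tendsto (tendsto_const_div_atTop_nhds_zero_nat C) ?_)
  exact Filter.eventually_atTop.2 ⟨1, hpartition⟩

variable {E : Type*} [NormedAddCommGroup E] [InnerProductSpace ℝ E]

lemma add_mul_sq_le_of_isMinOn {S : Set E} {φ : E → ℝ} {m : ℝ} {x u : E}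
    (hφ : StrongConvexOn S m φ) (hmin : IsMinOn φ S x) (hx : x ∈ S) (hu : u ∈ S) :
    φ x + m / 2 * ‖u - x‖ ^ 2 ≤ φ u := by
  rw [← le_sub_iff_add_le']
  refine le_of_forall_one_sub_mul_le fun s ⟨hs0, hs1⟩ => ?_
  have hle := isMinOn_iff.1 hmin _ (hφ.1 hx hu (sub_nonneg.2 hs1.le) hs0.le (by ring))
  have hconv := hφ.2 hx hu (sub_nonneg.2 hs1.le) hs0.le (by ring)
  simp only [smul_eq_mul, norm_sub_rev x u] at hconv
  refine le_of_mul_le_mul_left ?_ hs0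
  linarith

lemma strongConvexOn_prox {S : Set E} {g : E → ℝ} (hg : ConvexOn ℝ S g) (c : E) (lam : ℝ) :
    StrongConvexOn S (1 / lam) (fun u => g u + ‖u - c‖ ^ 2 / (2 * lam)) := by
  have hlin : ConvexOn ℝ S (fun u => -⟪c, u⟫ / lam) :=
    (((-1 / lam) • innerₛₗ ℝ c).convexOn hg.1).congr fun u _ => by
      simp only [LinearMap.smul_apply, innerₛₗ_apply_apply, smul_eq_mul]
      ring
  rw [strongConvexOn_iff_convex]
  refine ((hg.add hlin).add_const (‖c‖ ^ 2 / (2 * lam))).congr fun u _ => ?_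
  simp only [Pi.add_apply, norm_sub_sq_real, real_inner_comm]
  ring

section Jung

variable {ι : Type*} [Fintype ι]

/-- The variance of the points `g i` with weights `w i`; its maximiser over the simplex gives the
center in Jung's theorem. -/
noncomputable def weightedVariance (g : ι → E) (w : ι → ℝ) : ℝ :=
  ∑ i, w i * ‖g i - ∑ j, w j • g j‖ ^ 2

lemma sum_mul_norm_sub_sq (g : ι → E) {w : ι → ℝ} (hw : ∑ i, w i = 1) (p : E) :
    ∑ i, w i * ‖g i - p‖ ^ 2 = weightedVariance g w + ‖∑ i, w i • g i - p‖ ^ 2 := by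
  set c := ∑ i, w i • g i with hc
  have hcenter : ∑ i, w i • (g i - c) = 0 := by
    simp only [smul_sub, Finset.sum_sub_distrib, ← Finset.sum_smul, hw, one_smul, ← hc, sub_self]
  have hcross : ∑ i, w i * (2 * ⟪g i - c, c - p⟫) = 0 := by
    calc ∑ i, w i * (2 * ⟪g i - c, c - p⟫) = 2 * ⟪∑ i, w i • (g i - c), c - p⟫ := by
          simp only [sum_inner, real_inner_smul_left, Finset.mul_sum, mul_left_comm]
      _ = 0 := by rw [hcenter, inner_zero_left, mul_zero]
  calc ∑ i, w i * ‖g i - p‖ ^ 2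
      = ∑ i, w i * (‖g i - c‖ ^ 2 + 2 * ⟪g i - c, c - p⟫ + ‖c - p‖ ^ 2) := by
        simp only [← norm_add_sq_real, sub_add_sub_cancel]
    _ = weightedVariance g w + ‖c - p‖ ^ 2 := by
        simp only [mul_add, Finset.sum_add_distrib, hcross, ← Finset.sum_mul, hw, one_mul, add_zero,
          weightedVariance, ← hc]

lemma weightedVariance_le_half {g : ι → E} {w : ι → ℝ} {P : ℝ} (hw : w ∈ stdSimplex ℝ ι)
    (hg : ∀ i j, ‖g i - g j‖ ^ 2 ≤ P) : weightedVariance g w ≤ P / 2 := by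
  have hpair : ∀ j, weightedVariance g w + ‖g j - ∑ i, w i • g i‖ ^ 2 ≤ P := by
    intro j
    calc weightedVariance g w + ‖g j - ∑ i, w i • g i‖ ^ 2 = ∑ i, w i * ‖g i - g j‖ ^ 2 := by
          rw [sum_mul_norm_sub_sq g hw.2, norm_sub_rev]
      _ ≤ ∑ i, w i * P := Finset.sum_le_sum fun i _ => mul_le_mul_of_nonneg_left (hg i j) (hw.1 i)
      _ = P := by rw [← Finset.sum_mul, hw.2, one_mul]
  have hmean : 2 * weightedVariance g w ≤ P := by
    calc 2 * weightedVariance g w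
        = ∑ j, w j * (weightedVariance g w + ‖g j - ∑ i, w i • g i‖ ^ 2) := by
          simp only [mul_add, Finset.sum_add_distrib, ← Finset.sum_mul, hw.2, two_mul, one_mul]
          rfl
      _ ≤ ∑ j, w j * P := Finset.sum_le_sum fun j _ => mul_le_mul_of_nonneg_left (hpair j) (hw.1 j)
      _ = P := by rw [← Finset.sum_mul, hw.2, one_mul]
  linarith

lemma weightedVariance_toward_vertex [DecidableEq ι] (g : ι → E) {w : ι → ℝ}
    (hw : ∑ i, w i = 1) (j : ι) (s : ℝ) :
    weightedVariance g ((1 - s) • w + s • Pi.single j 1)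
      = (1 - s) * weightedVariance g w + s * (1 - s) * ‖g j - ∑ i, w i • g i‖ ^ 2 := by
  set c := ∑ i, w i • g i with hc
  set w' : ι → ℝ := (1 - s) • w + s • Pi.single j 1 with hw'
  have hw'sum : ∑ i, w' i = 1 := by
    simp [hw', Finset.sum_add_distrib, ← Finset.mul_sum, hw]
  have hmoment : ∑ i, w' i * ‖g i - c‖ ^ 2
      = (1 - s) * weightedVariance g w + s * ‖g j - c‖ ^ 2 := by
    simp [hw', add_mul, Finset.sum_add_distrib, Finset.mul_sum, mul_assoc, Pi.single_apply,
      weightedVariance, hc]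
  have hcentroid : ∑ i, w' i • g i - c = s • (g j - c) := by
    simp only [hw', Pi.add_apply, Pi.smul_apply, smul_eq_mul, Pi.single_apply, mul_ite, mul_one,
      mul_zero, add_smul, mul_smul, ite_smul, zero_smul, Finset.sum_add_distrib,
      ← Finset.smul_sum, ← hc, Finset.sum_ite_eq', Finset.mem_univ, ↓reduceIte]
    module
  have := sum_mul_norm_sub_sq g hw'sum c
  rw [hmoment, hcentroid, norm_smul, mul_pow, Real.norm_eq_abs, sq_abs] at this
  linarith

end Jung

-- Jung's theorem: at the weights of maximal variance no point is farther from the centroid than the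
-- standard deviation, for moving weight to such a point would increase the variance.
lemma exists_norm_sub_sq_le_half {ι : Type*} [Finite ι] {g : ι → E} {P : ℝ}
    (hg : ∀ i j, ‖g i - g j‖ ^ 2 ≤ P) : ∃ c, ∀ j, ‖g j - c‖ ^ 2 ≤ P / 2 := by
  classical
  have := Fintype.ofFinite ι
  rcases isEmpty_or_nonempty ι with _ | ⟨⟨i₀⟩⟩
  · exact ⟨0, isEmptyElim⟩
  have hcont : Continuous (weightedVariance g) := by
    unfold weightedVariance
    fun_prop
  obtain ⟨w, hw, hmax⟩ := (isCompact_stdSimplex (𝕜 := ℝ) ι).exists_isMaxOn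
    ⟨_, single_mem_stdSimplex ℝ i₀⟩ hcont.continuousOn
  refine ⟨∑ i, w i • g i, fun j => le_trans ?_ (weightedVariance_le_half hw hg)⟩
  refine le_of_forall_one_sub_mul_le fun s ⟨hs0, hs1⟩ => ?_
  have hle := isMaxOn_iff.1 hmax _ (convex_stdSimplex ℝ ι hw (single_mem_stdSimplex ℝ j)
    (sub_nonneg.2 hs1.le) hs0.le (by ring))
  rw [weightedVariance_toward_vertex g hw.2] at hle
  exact le_of_mul_le_mul_left (by linarith) hs0

/-- The error at `u` of the linearization of `f` at `x` with slope `f' x`, which bounds the gaps of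
a bundle cycle. For a constant slope it is antisymmetric in `x`, `u` and telescopes. -/
def linearizationError (f : E → ℝ) (f' : E → E) (x u : E) : ℝ := f u - f x - ⟪f' x, u - x⟫

lemma linearizationError_le_add {f : E → ℝ} {f' : E → E} {x c : E} {κ : ℝ} (hc : ‖f' x - c‖ ≤ κ)
    (u : E) :
    linearizationError f f' x u ≤ κ * ‖u - x‖ + linearizationError f (fun _ => c) x u := by
  have hcs : ⟪c - f' x, u - x⟫ ≤ κ * ‖u - x‖ :=
    (real_inner_le_norm _ _).trans (by rw [norm_sub_rev]; gcongr)
  rw [inner_sub_left] at hcs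
  unfold linearizationError
  linarith

/-- `f'` selects on `S` a subgradient of `f` relative to `S`, subject to the hybrid condition
`‖f' x - f' y‖ ≤ 2 M + L ‖x - y‖`. -/
structure IsHybridOracle (S : Set E) (f : E → ℝ) (f' : E → E) (M L : ℝ) : Prop where
  subgradient : ∀ x ∈ S, ∀ u ∈ S, f x + ⟪f' x, u - x⟫ ≤ f u
  hybrid : ∀ x ∈ S, ∀ y ∈ S, ‖f' x - f' y‖ ≤ 2 * M + L * ‖x - y‖

namespace IsHybridOracle

variable {S : Set E} {f : E → ℝ} {f' : E → E} {M L : ℝ} {x y : E}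

lemma linearizationError_nonneg (hf : IsHybridOracle S f f' M L) (hx : x ∈ S) (hy : y ∈ S) :
    0 ≤ linearizationError f f' x y := by
  unfold linearizationError
  linarith [hf.subgradient x hx y hy]

-- Integrating the slope bound along `[x, y]` without differentiability: the increments of `G` below
-- are quadratically small, so `G` cannot increase.
lemma linearizationError_le (hf : IsHybridOracle S f f' M L) (hS : Convex ℝ S) (hx : x ∈ S)
    (hy : y ∈ S) : linearizationError f f' x y ≤ 2 * M * ‖y - x‖ + L / 2 * ‖y - x‖ ^ 2 := by
  set v := y - x with hv
  let G : ℝ → ℝ := fun t =>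
    f (x + t • v) - t * ⟪f' x, v⟫ - 2 * M * t * ‖v‖ - L / 2 * t ^ 2 * ‖v‖ ^ 2
  suffices G 1 ≤ G 0 by
    simp only [G, hv, one_smul, add_sub_cancel, zero_smul, add_zero] at this
    unfold linearizationError
    linarith
  refine le_of_forall_sub_le_mul_sq (C := L / 2 * ‖v‖ ^ 2) fun s t hs hst ht => ?_
  have hmem : ∀ τ : ℝ, 0 ≤ τ → τ ≤ 1 → x + τ • v ∈ S := fun τ h0 h1 =>
    hS.add_smul_sub_mem hx hy ⟨h0, h1⟩
  have hzt := hmem t (hs.trans hst) ht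
  have hsubgrad := hf.subgradient _ hzt _ (hmem s hs (hst.trans ht))
  rw [add_sub_add_left_eq_sub, ← sub_smul, inner_smul_right] at hsubgrad
  have hslope : ⟪f' (x + t • v), v⟫ ≤ ⟪f' x, v⟫ + (2 * M + L * (t * ‖v‖)) * ‖v‖ := by
    rw [← sub_le_iff_le_add', ← inner_sub_left]
    refine (real_inner_le_norm _ _).trans (mul_le_mul_of_nonneg_right ?_ (norm_nonneg v))
    simpa only [add_sub_cancel_left, norm_smul, Real.norm_of_nonneg (hs.trans hst)]
      using hf.hybrid _ hzt x hx
  have := mul_le_mul_of_nonneg_left hslope (sub_nonneg.2 hst)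
  simp only [G]
  linarith

lemma abs_linearizationError_const_le (hf : IsHybridOracle S f f' M L) {c : E} {κ : ℝ}
    (hx : x ∈ S) (hy : y ∈ S) (hcx : ‖f' x - c‖ ≤ κ) (hcy : ‖f' y - c‖ ≤ κ) :
    |linearizationError f (fun _ => c) x y| ≤ κ * ‖y - x‖ := by
  have hxy := (hf.linearizationError_nonneg hx hy).trans (linearizationError_le_add hcx y)
  have hyx := (hf.linearizationError_nonneg hy hx).trans (linearizationError_le_add hcy x)
  have hsymm : linearizationError f (fun _ => c) y x = -linearizationError f (fun _ => c) x y := by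
    simp only [linearizationError, ← neg_sub y x, inner_neg_right]
    ring
  rw [hsymm, norm_sub_rev] at hyx
  exact abs_le.2 ⟨by linarith, by linarith⟩

lemma exists_center (hf : IsHybridOracle S f f' M L) (hL : 0 ≤ L) {ι : Type*} [Finite ι]
    {p : ι → E} {D : ℝ} (hp : ∀ i, p i ∈ S) (hD : ∀ i j, ‖p i - p j‖ ≤ D) :
    ∃ c, ∀ i, ‖f' (p i) - c‖ ≤ √((2 * M + L * D) ^ 2 / 2) := by
  have hdiam : ∀ i j, ‖f' (p i) - f' (p j)‖ ^ 2 ≤ (2 * M + L * D) ^ 2 := fun i j => by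
    gcongr
    refine (hf.hybrid _ (hp i) _ (hp j)).trans ?_
    gcongr
    exact hD i j
  obtain ⟨c, hc⟩ := exists_norm_sub_sq_le_half hdiam
  exact ⟨c, fun i => Real.le_sqrt_of_sq_le (hc i)⟩

end IsHybridOracle

section Cycle

/-- A cycle of `N` iterations of the proximal bundle method, starting at iteration `i`: `f + h` is
the objective on `S`, `xhat` the prox-center, `lam` the stepsize, `F l` the model, `x l` the
iterate, `φb l` the running minimum of `f + h + χ / (2 lam) ‖· - xhat‖²`, and `t l` the gap between
`φb l` and the optimal value of the prox subproblem. In `update`, `fbar` is the aggregated model. -/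
structure IsBundleCycle (S : Set E) (f h : E → ℝ) (f' : E → E) (χ lam : ℝ) (xhat : E) (i N : ℕ)
    (F : ℕ → E → ℝ) (x : ℕ → E) (φb t : ℕ → ℝ) : Prop where
  first_model : ∀ u ∈ S, f xhat + ⟪f' xhat, u - xhat⟫ ≤ F i u
  mem : ∀ l, i ≤ l → l < i + N → x l ∈ S
  first_value : φb i = f (x i) + h (x i) + χ / (2 * lam) * ‖x i - xhat‖ ^ 2
  next_value : ∀ l, i ≤ l → l + 1 < i + N → φb (l + 1) = min (φb l)
    (f (x (l + 1)) + h (x (l + 1)) + χ / (2 * lam) * ‖x (l + 1) - xhat‖ ^ 2)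
  gap_eq : ∀ l, i ≤ l → l < i + N →
    t l = φb l - (F l (x l) + h (x l) + ‖x l - xhat‖ ^ 2 / (2 * lam))
  update : ∀ l, i ≤ l → l + 1 < i + N → ∃ fbar : E → ℝ,
    ConvexOn ℝ S fbar ∧ fbar (x l) = F l (x l) ∧
    IsMinOn (fun u => fbar u + h u + ‖u - xhat‖ ^ 2 / (2 * lam)) S (x l) ∧
    (∀ u ∈ S, fbar u ≤ F (l + 1) u) ∧ ∀ u ∈ S, f (x l) + ⟪f' (x l), u - x l⟫ ≤ F (l + 1) u

/-- The inequalities on the iterates `x` and gaps `t` of a bundle cycle, reindexed to start at `0`,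
from which its length is bounded; `ω` stands for `1 - χ`. -/
structure IsGapRecursion (S : Set E) (f : E → ℝ) (f' : E → E) (ω lam : ℝ) (xhat : E) (N : ℕ)
    (x : ℕ → E) (t : ℕ → ℝ) : Prop where
  mem : ∀ k < N, x k ∈ S
  start : t 0 ≤ linearizationError f f' xhat (x 0) - ω * (‖x 0 - xhat‖ ^ 2 / (2 * lam))
  descent : ∀ k, k + 1 < N → t (k + 1) + ‖x (k + 1) - x k‖ ^ 2 / (2 * lam) ≤ t k
  gap : ∀ k, k + 1 < N → t (k + 1) ≤
    linearizationError f f' (x k) (x (k + 1)) - ω * (‖x (k + 1) - xhat‖ ^ 2 / (2 * lam))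

variable {S : Set E} {f h : E → ℝ} {f' : E → E} {χ lam : ℝ} {xhat : E} {i N : ℕ}
  {F : ℕ → E → ℝ} {x : ℕ → E} {φb t : ℕ → ℝ}

namespace IsBundleCycle

lemma value_le (hc : IsBundleCycle S f h f' χ lam xhat i N F x φb t) {l : ℕ} (hil : i ≤ l)
    (hl : l < i + N) : φb l ≤ f (x l) + h (x l) + χ / (2 * lam) * ‖x l - xhat‖ ^ 2 := by
  rcases hil.eq_or_lt with rfl | hlt
  · exact hc.first_value.le
  · obtain ⟨m, rfl⟩ := Nat.exists_eq_add_of_lt hlt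
    rw [hc.next_value (i + m) (by omega) hl]
    exact min_le_right _ _

lemma gap_le_of_minorant (hc : IsBundleCycle S f h f' χ lam xhat i N F x φb t) {l : ℕ}
    (hil : i ≤ l) (hl : l < i + N) {p : E} (hp : f p + ⟪f' p, x l - p⟫ ≤ F l (x l)) :
    t l ≤ linearizationError f f' p (x l) - (1 - χ) * (‖x l - xhat‖ ^ 2 / (2 * lam)) := by
  have hvalue := hc.value_le hil hl
  rw [div_mul_eq_mul_div, mul_div_assoc] at hvalue
  unfold linearizationError
  linarith [hc.gap_eq l hil hl]

lemma gap_add_sq_le (hc : IsBundleCycle S f h f' χ lam xhat i N F x φb t) (hh : ConvexOn ℝ S h)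
    {l : ℕ} (hil : i ≤ l) (hl : l + 1 < i + N) :
    t (l + 1) + ‖x (l + 1) - x l‖ ^ 2 / (2 * lam) ≤ t l := by
  obtain ⟨fbar, hfbar, hagree, hmin, hminorant, -⟩ := hc.update l hil hl
  have hx := hc.mem (l + 1) (by omega) hl
  have hgrowth := add_mul_sq_le_of_isMinOn (strongConvexOn_prox (hfbar.add hh) xhat lam) hmin
    (hc.mem l hil (by omega)) hx
  have hvalue : φb (l + 1) ≤ φb l := (hc.next_value l hil hl).trans_le (min_le_left _ _)
  have hscale : 1 / lam / 2 * ‖x (l + 1) - x l‖ ^ 2 = ‖x (l + 1) - x l‖ ^ 2 / (2 * lam) := by ring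
  simp only [Pi.add_apply, hagree, hscale] at hgrowth
  linarith [hc.gap_eq l hil (by omega), hc.gap_eq (l + 1) (by omega) hl, hminorant _ hx]

lemma isGapRecursion (hc : IsBundleCycle S f h f' χ lam xhat i N F x φb t) (hh : ConvexOn ℝ S h)
    (hN : 1 ≤ N) :
    IsGapRecursion S f f' (1 - χ) lam xhat N (fun k => x (i + k)) (fun k => t (i + k)) where
  mem k hk := hc.mem _ (by omega) (by omega)
  start := hc.gap_le_of_minorant le_rfl (by omega)
    (hc.first_model _ (hc.mem _ le_rfl (by omega)))
  descent k hk := hc.gap_add_sq_le hh (l := i + k) (by omega) (by omega)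
  gap k hk := by
    obtain ⟨-, -, -, -, -, hlinear⟩ := hc.update (i + k) (by omega) (by omega)
    have hmem := hc.mem (i + k + 1) (by omega) (by omega)
    exact hc.gap_le_of_minorant (l := i + k + 1) (by omega) (by omega) (hlinear _ hmem)

end IsBundleCycle

namespace IsGapRecursion

variable {M L D ω ε : ℝ}

lemma centeredRecursion (hG : IsGapRecursion S f f' ω lam xhat N x t)
    (hf : IsHybridOracle S f f' M L) (hxhat : xhat ∈ S) {c : E} {κ : ℝ} (hcxhat : ‖f' xhat - c‖ ≤ κ)
    (hc : ∀ k < N, ‖f' (x k) - c‖ ≤ κ) :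
    CenteredRecursion N κ ω (1 / (2 * lam)) t (fun k => ‖x (k + 1) - x k‖)
      (fun k => ‖x k - xhat‖) (fun k => linearizationError f (fun _ => c) xhat (x k)) where
  start := by
    have hstart := hG.start
    rw [div_eq_mul_one_div] at hstart
    linarith [linearizationError_le_add hcxhat (f := f) (x 0)]
  abs_value_le k hk := hf.abs_linearizationError_const_le hxhat (hG.mem k hk) hcxhat (hc k hk)
  descent k hk := by
    rw [mul_comm, mul_one_div]
    exact hG.descent k hk
  gap k hk := by
    have hgap := hG.gap k hk
    rw [div_eq_mul_one_div] at hgap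
    have hsplit : linearizationError f (fun _ => c) (x k) (x (k + 1))
        = linearizationError f (fun _ => c) xhat (x (k + 1))
          - linearizationError f (fun _ => c) xhat (x k) := by
      simp only [linearizationError, inner_sub_right]
      ring
    linarith [linearizationError_le_add (hc k (by omega)) (f := f) (x (k + 1))]

lemma mul_last_gap_le (hG : IsGapRecursion S f f' ω lam xhat N x t)
    (hf : IsHybridOracle S f f' M L) (hL : 0 ≤ L)
    (hdiam : ∀ a ∈ S, ∀ b ∈ S, ‖a - b‖ ≤ D) (hω : 0 < ω) (hω1 : ω ≤ 1) (hlam : 0 < lam)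
    (hN : 1 ≤ N) (hxhat : xhat ∈ S) :
    ω * N * t (N - 1) ≤ 15 / 8 * lam * (2 * M + L * D) ^ 2 := by
  let p : Option (Fin N) → E := fun o => o.elim xhat fun k => x k
  have hp : ∀ o, p o ∈ S := Option.rec hxhat fun k => hG.mem k k.isLt
  obtain ⟨c, hc⟩ := hf.exists_center hL hp fun o o' => hdiam _ (hp o) _ (hp o')
  have hlast := (hG.centeredRecursion hf hxhat (hc none) fun k hk => hc (some ⟨k, hk⟩)).last_gap_le
    (by positivity) hω hω1 hN
  rw [Real.sq_sqrt (by positivity)] at hlast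
  calc ω * N * t (N - 1) ≤ 15 / 8 * ((2 * M + L * D) ^ 2 / 2 / (1 / (2 * lam))) := hlast
    _ = 15 / 8 * lam * (2 * M + L * D) ^ 2 := by field_simp

lemma last_gap_le_of_small_curvature (hG : IsGapRecursion S f f' ω lam xhat N x t)
    (hf : IsHybridOracle S f f' M L) (hM : 0 < M) (hL : 0 ≤ L)
    (hdiam : ∀ a ∈ S, ∀ b ∈ S, ‖a - b‖ ≤ D) (hω : 0 < ω) (hω1 : ω ≤ 1) (hlam : 0 < lam)
    (hN : 1 ≤ N) (hxhat : xhat ∈ S) (hLD : L * D ≤ M / 16) (hε : 0 < ε)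
    (hstep : lam ≤ ω ^ 2 * N * ε / (2 * (M ^ 2 + ε * L)
      * (8 + 12 * Real.log (1 + L ^ 2 * D ^ 2 * N / (16 * M ^ 2))))) :
    t (N - 1) ≤ ω * ε / 2 := by
  have hD : 0 ≤ D := (norm_nonneg _).trans (hdiam _ hxhat _ hxhat)
  have hT := log_one_add_curvature_nonneg L D M N
  have hbudget : 16 * lam * M ^ 2 / (ω * ε) ≤ ω * N := by
    calc 16 * lam * M ^ 2 / (ω * ε) ≤ 16 * lam * M ^ 2 / (ω * ε) + 16 * (lam * L) / ω :=
          le_add_of_nonneg_right (by positivity)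
      _ ≤ _ := le_mul_of_one_le_right (by positivity) (by linarith)
      _ ≤ ω * N := normalized_stepsize_le hω hM hL hε hT hstep
  refine le_of_mul_le_mul_left ?_ (show 0 < ω * N by positivity)
  calc ω * N * t (N - 1) ≤ 15 / 8 * lam * (2 * M + L * D) ^ 2 :=
        hG.mul_last_gap_le hf hL hdiam hω hω1 hlam hN hxhat
    _ ≤ 15 / 8 * lam * (2 * M + M / 16) ^ 2 := by gcongr
    _ ≤ 8 * lam * M ^ 2 := by nlinarith [mul_nonneg hlam.le (sq_nonneg M)]
    _ = 16 * lam * M ^ 2 / (ω * ε) * (ω * ε / 2) := by field_simp; norm_num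
    _ ≤ ω * N * (ω * ε / 2) := by gcongr

lemma exists_gap_le_of_large_curvature (hG : IsGapRecursion S f f' ω lam xhat N x t)
    (hf : IsHybridOracle S f f' M L) (hS : Convex ℝ S) (hM : 0 < M) (hL : 0 ≤ L)
    (hdiam : ∀ a ∈ S, ∀ b ∈ S, ‖a - b‖ ≤ D) (hω : 0 < ω) (hω1 : ω ≤ 1) (hlam : 0 < lam)
    (hN : 1 ≤ N) (hxhat : xhat ∈ S) (hLD : M / 16 ≤ L * D) (hε : 0 < ε)
    (hstep : lam ≤ ω ^ 2 * N * ε / (2 * (M ^ 2 + ε * L)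
      * (8 + 12 * Real.log (1 + L ^ 2 * D ^ 2 * N / (16 * M ^ 2))))) :
    ∃ k < N, t k ≤ ω * ε / 2 := by
  have hx0 := hG.mem 0 hN
  refine exists_le_of_hybrid_recursion hM hL hω hω1 hlam hε hN hLD (norm_nonneg (x 0 - xhat))
    (hdiam _ hx0 _ hxhat) hstep ?_ hG.descent fun k hk => ?_
  · linarith [hG.start, hf.linearizationError_le hS hxhat hx0]
  · have hprox : 0 ≤ ω * (‖x (k + 1) - xhat‖ ^ 2 / (2 * lam)) := by positivity
    linarith [hG.gap k hk, hf.linearizationError_le hS (hG.mem k (by omega)) (hG.mem _ hk)]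

end IsGapRecursion

end Cycle

theorem upb_small_stepsize_serious_general {S : Set E} {f h : E → ℝ} {f' : E → E}
    {M L D χ ε lam : ℝ} {xhat : E} {i N : ℕ} {F : ℕ → E → ℝ} {x : ℕ → E} {φb t : ℕ → ℝ}
    (hM : 0 < M) (hL : 0 ≤ L) (hh : ConvexOn ℝ S h) (hf : IsHybridOracle S f f' M L)
    (hdiam : ∀ a ∈ S, ∀ b ∈ S, ‖a - b‖ ≤ D) (hχ0 : 0 ≤ χ) (hχ1 : χ < 1) (hε : 0 < ε)
    (hlam : 0 < lam) (hN : 1 ≤ N)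
    (hstep : lam ≤ (1 - χ) ^ 2 * N * ε / (2 * (M ^ 2 + ε * L)
      * (8 + 12 * Real.log (1 + L ^ 2 * D ^ 2 * N / (16 * M ^ 2)))))
    (hxhat : xhat ∈ S) (hc : IsBundleCycle S f h f' χ lam xhat i N F x φb t) :
    ∃ l, i ≤ l ∧ l < i + N ∧ t l ≤ (1 - χ) * ε / 2 := by
  have hω : 0 < 1 - χ := sub_pos.2 hχ1
  have hω1 : 1 - χ ≤ 1 := sub_le_self 1 hχ0
  have hG := hc.isGapRecursion hh hN
  obtain ⟨k, hk, hgap⟩ : ∃ k < N, t (i + k) ≤ (1 - χ) * ε / 2 := by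
    rcases le_total (L * D) (M / 16) with hLD | hLD
    · exact ⟨N - 1, by omega, hG.last_gap_le_of_small_curvature hf hM hL hdiam hω hω1 hlam hN hxhat
        hLD hε hstep⟩
    · exact hG.exists_gap_le_of_large_curvature hf hh.1 hM hL hdiam hω hω1 hlam hN hxhat hLD hε
        hstep
  exact ⟨i + k, i.le_add_right k, by omega, hgap⟩

/-- Lemma `lemserious`: if the stepsize of a cycle of U-PB satisfies
`λ ≤ (1−χ)²N̄ε̄/(2(M_f² + ε̄L_f)B)`, then the cycle (of at most `N̄` iterations, starting at
iteration `i`) must be a serious one, i.e. some iteration `l ∈ [i, i+N̄−1]` satisfies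
`t_l ≤ (1−χ)ε̄/2`. -/
theorem upb_small_stepsize_serious
    {n : ℕ} (f h : EuclideanSpace ℝ (Fin n) → ℝ)
    (domf domh : Set (EuclideanSpace ℝ (Fin n)))
    (f' : EuclideanSpace ℝ (Fin n) → EuclideanSpace ℝ (Fin n))
    (Mf Lf : ℝ) (hMf : 0 < Mf) (hLf : 0 ≤ Lf)
    (hsub : domh ⊆ domf)
    (hfconv : ConvexOn ℝ domf f) (hhconv : ConvexOn ℝ domh h)
    (hflsc : LowerSemicontinuousOn f domf) (hhlsc : LowerSemicontinuousOn h domh)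
    (horacle : ∀ x ∈ domh, ∀ u ∈ domf, f x + ⟪f' x, u - x⟫ ≤ f u)
    (hhybrid : ∀ x ∈ domh, ∀ y ∈ domh, ‖f' x - f' y‖ ≤ 2 * Mf + Lf * ‖x - y‖)
    (D : ℝ) (hD : 0 < D) (hdiam : ∀ a ∈ domh, ∀ b ∈ domh, ‖a - b‖ ≤ D)
    (χ ε lam : ℝ) (hχ0 : 0 ≤ χ) (hχ1 : χ < 1) (hε : 0 < ε) (hlam : 0 < lam)
    (Nbar : ℕ) (hNbar : 1 ≤ Nbar)
    (B : ℝ) (hB : B = 8 + 12 * Real.log (1 + Lf ^ 2 * D ^ 2 * Nbar / (16 * Mf ^ 2)))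
    (hstep : lam ≤ (1 - χ) ^ 2 * Nbar * ε / (2 * (Mf ^ 2 + ε * Lf) * B))
    (xhat : EuclideanSpace ℝ (Fin n)) (hxhat : xhat ∈ domh)
    (i : ℕ)
    -- the iterations of the cycle, `l = i, …, i + N̄ − 1`
    (F : ℕ → EuclideanSpace ℝ (Fin n) → ℝ)
    (x : ℕ → EuclideanSpace ℝ (Fin n)) (φb t : ℕ → ℝ)
    (hFconv : ∀ l, i ≤ l → l < i + Nbar → ConvexOn ℝ domf (F l))
    (hFle : ∀ l, i ≤ l → l < i + Nbar → ∀ u ∈ domf, F l u ≤ f u)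
    (hFilow : ∀ u ∈ domf, f xhat + ⟪f' xhat, u - xhat⟫ ≤ F i u)
    (hxdom : ∀ l, i ≤ l → l < i + Nbar → x l ∈ domh)
    (hxmin : ∀ l, i ≤ l → l < i + Nbar → ∀ u ∈ domh,
      F l (x l) + h (x l) + ‖x l - xhat‖ ^ 2 / (2 * lam)
        ≤ F l u + h u + ‖u - xhat‖ ^ 2 / (2 * lam))
    (hφbi : φb i = f (x i) + h (x i) + χ / (2 * lam) * ‖x i - xhat‖ ^ 2)
    (hφbrec : ∀ l, i ≤ l → l + 1 < i + Nbar →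
      φb (l + 1) = min (φb l)
        (f (x (l + 1)) + h (x (l + 1)) + χ / (2 * lam) * ‖x (l + 1) - xhat‖ ^ 2))
    (ht : ∀ l, i ≤ l → l < i + Nbar →
      t l = φb l - (F l (x l) + h (x l) + ‖x l - xhat‖ ^ 2 / (2 * lam)))
    (hbundle : ∀ l, i ≤ l → l + 1 < i + Nbar →
      ∃ fbar : EuclideanSpace ℝ (Fin n) → ℝ,
        ConvexOn ℝ domf fbar ∧ (∀ u ∈ domf, fbar u ≤ f u) ∧
        fbar (x l) = F l (x l) ∧
        (∀ u ∈ domh, fbar (x l) + h (x l) + ‖x l - xhat‖ ^ 2 / (2 * lam)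
          ≤ fbar u + h u + ‖u - xhat‖ ^ 2 / (2 * lam)) ∧
        (∀ u ∈ domf, fbar u ≤ F (l + 1) u) ∧
        (∀ u ∈ domf, f (x l) + ⟪f' (x l), u - x l⟫ ≤ F (l + 1) u)) :
    ∃ l, i ≤ l ∧ l < i + Nbar ∧ t l ≤ (1 - χ) * ε / 2 := by
  subst hB
  refine upb_small_stepsize_serious_general hMf hLf hhconv
    ⟨fun y hy u hu => horacle y hy u (hsub hu), hhybrid⟩ hdiam hχ0 hχ1 hε hlam hNbar hstep hxhat
    { first_model := fun u hu => hFilow u (hsub hu)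
      mem := hxdom
      first_value := hφbi
      next_value := hφbrec
      gap_eq := ht
      update := fun l hil hl => ?_ }
  obtain ⟨fbar, hconv, -, hagree, hmin, hminorant, hlinear⟩ := hbundle l hil hl
  exact ⟨fbar, hconv.subset hsub hhconv.1, hagree, isMinOn_iff.2 hmin,
    fun u hu => hminorant u (hsub hu), fun u hu => hlinear u (hsub hu)⟩
end
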